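/- arXiv:2408.03051 — 6 statements merged into one kernel-verified Lean document; each statement's English description precedes it below -/
import Mathlib

section
/- Let $\alpha_1,\alpha_2>0$ and $H\in(0,2)$ with $H\neq 1$. Define $A(s)=\int_0^s\int_{-\infty}^0 e^{\alpha_1 u+\alpha_2 v}\,(v-u)^{H-2}\,du\,dv$ for $s>0$. Then, as $s\to 0^+$, $A(s)=\frac{s^{H}}{H(1-H)}-\frac{\alpha_1^{1-H}\,\Gamma(H)}{1-H}\,s+\frac{H\alpha_2+\alpha_1}{H(1-H)(H+1)}\,s^{H+1}-\frac{(\alpha_1+\alpha_2)\,\alpha_1^{1-H}\,\Gamma(H)}{2(1-H)}\,s^{2}+o\big(s^{\max\{2,\,H+1\}}\big)$. -/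
open MeasureTheory Filter Asymptotics Topology Real

noncomputable def gamI (a H v : ℝ) : ℝ := ∫ w in (0:ℝ)..v, w ^ (H - 1) * Real.exp (-a * w)

theorem gamI_ii (a H : ℝ) (hH : 0 < H) (x y : ℝ) :
    IntervalIntegrable (fun w : ℝ => w ^ (H - 1) * Real.exp (-a * w)) volume x y := by
  apply IntervalIntegrable.mul_continuousOn
  · exact intervalIntegral.intervalIntegrable_rpow' (by linarith)
  · fun_prop

theorem gamI_cont (a H : ℝ) (hH : 0 < H) : Continuous (gamI a H) :=
  intervalIntegral.continuous_primitive (gamI_ii a H hH) 0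

theorem gamI_deriv (a H : ℝ) (hH : 0 < H) (w : ℝ) (hw : 0 < w) :
    HasDerivAt (gamI a H) (w ^ (H - 1) * Real.exp (-a * w)) w := by
  refine intervalIntegral.integral_hasDerivAt_right (gamI_ii a H hH 0 w) ?_ ?_
  · refine ContinuousAt.stronglyMeasurableAtFilter (s := Set.Ioi 0) isOpen_Ioi ?_ w hw
    intro x hx
    have : x ≠ 0 := ne_of_gt hx
    fun_prop (disch := simp [this])
  · have : w ≠ 0 := ne_of_gt hw
    fun_prop (disch := simp [this])

theorem gamI_tendsto (a H : ℝ) (ha : 0 < a) (hH : 0 < H) :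
    Tendsto (gamI a H) atTop (𝓝 (a ^ (-H) * Real.Gamma H)) := by
  have h1 : IntegrableOn (fun w : ℝ => w ^ (H - 1) * Real.exp (-a * w)) (Set.Ioi 0) := by
    have := integrableOn_rpow_mul_exp_neg_mul_rpow (p := 1) (s := H - 1) (b := a) (by linarith)
      one_pos ha
    simpa using this
  have h2 := intervalIntegral_tendsto_integral_Ioi 0 h1 tendsto_id
  have h3 := Real.integral_rpow_mul_exp_neg_mul_Ioi hH ha
  have h4 : (∫ w in Set.Ioi (0:ℝ), w ^ (H - 1) * Real.exp (-a * w)) = a ^ (-H) * Real.Gamma H := by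
    rw [Real.rpow_neg ha.le, ← Real.inv_rpow ha.le, ← one_div, ← h3]
    simp
  rw [h4] at h2
  exact h2

theorem gamI_le (a H : ℝ) (ha : 0 < a) (hH : 0 < H) (v : ℝ) (hv : 0 < v) :
    |gamI a H v| ≤ v ^ H / H ∧ |gamI a H v - v ^ H / H| ≤ a / (H + 1) * v ^ (H + 1) := by
  have e1 : ∫ w in (0:ℝ)..v, w ^ (H - 1) = v ^ H / H := by
    rw [integral_rpow (Or.inl (by linarith))]
    simp [hH.ne']
  have e2 : ∫ w in (0:ℝ)..v, a * w ^ H = a / (H + 1) * v ^ (H + 1) := by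
    rw [intervalIntegral.integral_const_mul, integral_rpow (Or.inl (by linarith)),
      Real.zero_rpow (by linarith)]
    ring
  constructor
  · rw [← e1, ← Real.norm_eq_abs]
    refine intervalIntegral.norm_integral_le_of_norm_le hv.le (ae_of_all _ ?_)
      (intervalIntegral.intervalIntegrable_rpow' (by linarith))
    rintro w ⟨hw, -⟩
    rw [Real.norm_of_nonneg (by positivity)]
    apply mul_le_of_le_one_right (by positivity)
    rw [Real.exp_le_one_iff]
    nlinarith
  · rw [← e1, ← e2, gamI, ← intervalIntegral.integral_sub (gamI_ii a H hH 0 v)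
      (intervalIntegral.intervalIntegrable_rpow' (by linarith)), ← Real.norm_eq_abs]
    refine intervalIntegral.norm_integral_le_of_norm_le hv.le (ae_of_all _ ?_)
      ((intervalIntegral.intervalIntegrable_rpow' (by linarith)).const_mul a)
    rintro w ⟨hw, -⟩
    have h1 : Real.exp (-a * w) ≤ 1 := by
      rw [Real.exp_le_one_iff]
      nlinarith
    have h2 := Real.add_one_le_exp (-a * w)
    have h3 : w ^ H = w ^ (H - 1) * w := by
      rw [← Real.rpow_add_one hw.ne']; simp
    have h4 : 0 < w ^ (H - 1) := by positivity
    rw [h3, Real.norm_eq_abs, abs_le]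
    constructor <;> nlinarith

noncomputable def innerF (a b H v : ℝ) : ℝ :=
  Real.exp (b * v) * v ^ (H - 1) / (1 - H) - a ^ (1 - H) * Real.Gamma H / (1 - H)
    * Real.exp ((a + b) * v) + a / (1 - H) * (Real.exp ((a + b) * v) * gamI a H v)

theorem inner_eq (a b H : ℝ) (ha : 0 < a) (hH : 0 < H) (hH1 : H ≠ 1) (v : ℝ) (hv : 0 < v) :
    (∫ u in Set.Iic (0:ℝ), Real.exp (a * u + b * v) * (v - u) ^ (H - 2)) = innerF a b H v := by
  have h0 : H - 1 ≠ 0 := sub_ne_zero.2 hH1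
  have h0' : 1 - H ≠ 0 := sub_ne_zero.2 hH1.symm
  have key := integral_comp_neg_Ioi 0
    (fun u : ℝ => Real.exp (a * u + b * v) * (v - u) ^ (H - 2))
  rw [neg_zero] at key
  rw [← key]
  have hd : ∀ x ∈ Set.Ici (0:ℝ), HasDerivAt
      (fun x => Real.exp ((a + b) * v) * (((v + x) ^ (H - 1) * Real.exp (-a * (v + x))
        + a * gamI a H (v + x)) / (H - 1)))
      (Real.exp (a * (-x) + b * v) * (v - (-x)) ^ (H - 2)) x := by
    intro x hx
    have hx : (0:ℝ) ≤ x := hx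
    have hp : 0 < v + x := by linarith
    have d1 : HasDerivAt (fun x : ℝ => v + x) 1 x := (hasDerivAt_id x).const_add v
    have d2 := d1.rpow_const (p := H - 1) (Or.inl hp.ne')
    have d3 := ((d1.const_mul (-a)).exp)
    have d4 := ((gamI_deriv a H hH (v + x) hp).comp x d1).const_mul a
    have d5 := (((d2.mul d3).add d4).div_const (H - 1)).const_mul (Real.exp ((a + b) * v))
    refine d5.congr_deriv ?_
    have e1 : Real.exp (a * (-x) + b * v) = Real.exp ((a + b) * v) * Real.exp (-a * (v + x)) := by
      rw [← Real.exp_add]; congr 1; ring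
    rw [e1, sub_neg_eq_add, show H - 1 - 1 = H - 2 by ring]
    field_simp
    ring
  have ht : Tendsto (fun x => Real.exp ((a + b) * v) * (((v + x) ^ (H - 1) * Real.exp (-a * (v + x))
        + a * gamI a H (v + x)) / (H - 1))) atTop
      (𝓝 (Real.exp ((a + b) * v) * ((0 + a * (a ^ (-H) * Real.Gamma H)) / (H - 1)))) := by
    have t1 : Tendsto (fun x : ℝ => v + x) atTop atTop := tendsto_atTop_add_const_left _ _ tendsto_id
    have t2 := (tendsto_rpow_mul_exp_neg_mul_atTop_nhds_zero (H - 1) a ha).comp t1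
    have t3 := ((gamI_tendsto a H ha hH).comp t1).const_mul a
    exact ((t2.add t3).div_const _).const_mul _
  rw [integral_Ioi_of_hasDerivAt_of_nonneg' hd ?_ ht]
  · have e1 : a ^ (1 - H) = a * a ^ (-H) := by
      rw [sub_eq_add_neg, Real.rpow_add ha, Real.rpow_one]
    have e2 : Real.exp (b * v) = Real.exp ((a + b) * v) * Real.exp (-a * v) := by
      rw [← Real.exp_add]; congr 1; ring
    rw [innerF, e1, e2, add_zero, show H - 1 = -(1 - H) by ring]
    field_simp
    ring
  · intro x hx
    have hx : (0:ℝ) < x := hx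
    have : 0 < v - (-x) := by linarith
    positivity

theorem innerF_ii (a b H : ℝ) (hH : 0 < H) (x y : ℝ) :
    IntervalIntegrable (innerF a b H) volume x y := by
  have hc := gamI_cont a H hH
  refine IntervalIntegrable.add (IntervalIntegrable.sub ?_ ?_) ?_
  · refine IntervalIntegrable.div_const (IntervalIntegrable.continuousOn_mul ?_ ?_) _
    · exact intervalIntegral.intervalIntegrable_rpow' (by linarith)
    · fun_prop
  · apply Continuous.intervalIntegrable; fun_prop
  · apply Continuous.intervalIntegrable; fun_prop

theorem exp_O2 (c : ℝ) :
    (fun v : ℝ => Real.exp (c * v) - 1 - c * v) =O[𝓝[>] (0:ℝ)] fun v => v ^ 2 := by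
  have hev : ∀ᶠ v : ℝ in 𝓝[>] (0:ℝ), |c * v| < 1 := by
    have : Continuous fun v : ℝ => |c * v| := by fun_prop
    exact nhdsWithin_le_nhds (this.continuousAt.eventually_lt continuousAt_const (by simp))
  refine IsBigO.of_bound (c ^ 2) ?_
  filter_upwards [hev] with v hv
  have := Real.abs_exp_sub_one_sub_id_le hv.le
  rw [Real.norm_eq_abs, Real.norm_of_nonneg (by positivity)]
  nlinarith

theorem exp_O1 (c : ℝ) :
    (fun v : ℝ => Real.exp (c * v) - 1) =O[𝓝[>] (0:ℝ)] fun v => v := by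
  have hev : ∀ᶠ v : ℝ in 𝓝[>] (0:ℝ), |c * v| < 1 := by
    have : Continuous fun v : ℝ => |c * v| := by fun_prop
    exact nhdsWithin_le_nhds (this.continuousAt.eventually_lt continuousAt_const (by simp))
  refine IsBigO.of_bound (2 * |c|) ?_
  filter_upwards [hev] with v hv
  have := Real.abs_exp_sub_one_le hv.le
  rw [abs_mul] at this
  simp only [Real.norm_eq_abs]
  linarith

noncomputable def polP (a b H v : ℝ) : ℝ :=
  1 / (1 - H) * v ^ (H - 1) - a ^ (1 - H) * Real.Gamma H / (1 - H)
   - a ^ (1 - H) * Real.Gamma H / (1 - H) * (a + b) * v + (b / (1 - H) + a / (H * (1 - H))) * v ^ H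

theorem innerF_O (a b H : ℝ) (ha : 0 < a) (hH : 0 < H) :
    (fun v : ℝ => innerF a b H v - polP a b H v) =O[𝓝[>] (0:ℝ)]
      fun v => v ^ (H + 1) + v ^ (2:ℝ) := by
  have hpos : ∀ᶠ v : ℝ in 𝓝[>] (0:ℝ), 0 < v := self_mem_nhdsWithin
  have o1 : (fun v : ℝ => v ^ (H + 1)) =O[𝓝[>] (0:ℝ)] fun v => v ^ (H + 1) + v ^ (2:ℝ) := by
    refine IsBigO.of_bound 1 ?_
    filter_upwards [hpos] with v hv
    rw [Real.norm_of_nonneg (by positivity), Real.norm_of_nonneg (by positivity)]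
    have : 0 < v ^ (2:ℝ) := by positivity
    linarith
  have o2 : (fun v : ℝ => v ^ (2:ℕ)) =O[𝓝[>] (0:ℝ)] fun v => v ^ (H + 1) + v ^ (2:ℝ) := by
    refine IsBigO.of_bound 1 ?_
    filter_upwards [hpos] with v hv
    rw [Real.norm_of_nonneg (by positivity), Real.norm_of_nonneg (by positivity)]
    have : 0 < v ^ (H + 1) := by positivity
    rw [← Real.rpow_natCast]
    push_cast
    linarith
  have g1 : (gamI a H) =O[𝓝[>] (0:ℝ)] fun v => v ^ H := by
    refine IsBigO.of_bound (1 / H) ?_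
    filter_upwards [hpos] with v hv
    rw [Real.norm_eq_abs, Real.norm_of_nonneg (by positivity)]
    have := (gamI_le a H ha hH v hv).1
    rw [one_div_mul_eq_div]
    exact this
  have g2 : (fun v => gamI a H v - v ^ H / H) =O[𝓝[>] (0:ℝ)] fun v => v ^ (H + 1) := by
    refine IsBigO.of_bound (a / (H + 1)) ?_
    filter_upwards [hpos] with v hv
    rw [Real.norm_eq_abs, Real.norm_of_nonneg (by positivity)]
    exact (gamI_le a H ha hH v hv).2
  have p1 : (fun v : ℝ => (Real.exp (b * v) - 1 - b * v) * v ^ (H - 1)) =O[𝓝[>] (0:ℝ)]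
      fun v => v ^ (H + 1) := by
    refine ((exp_O2 b).mul (isBigO_refl (fun v : ℝ => v ^ (H - 1)) _)).congr' EventuallyEq.rfl ?_
    filter_upwards [hpos] with v hv
    rw [← Real.rpow_natCast, ← Real.rpow_add hv]
    congr 1; push_cast; ring
  have p2 : (fun v : ℝ => (Real.exp ((a + b) * v) - 1) * gamI a H v) =O[𝓝[>] (0:ℝ)]
      fun v => v ^ (H + 1) := by
    refine ((exp_O1 (a + b)).mul g1).congr' EventuallyEq.rfl ?_
    filter_upwards [hpos] with v hv
    rw [Real.rpow_add_one hv.ne', mul_comm]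
  have q1 := (p1.trans o1).const_mul_left (1 / (1 - H))
  have q2 := ((exp_O2 (a + b)).trans o2).const_mul_left (a ^ (1 - H) * Real.Gamma H / (1 - H))
  have q3 := ((p2.add g2).trans o1).const_mul_left (a / (1 - H))
  refine ((q1.sub q2).add q3).congr' ?_ EventuallyEq.rfl
  filter_upwards [hpos] with v hv
  have e : v ^ H = v * v ^ (H - 1) := by
    rw [mul_comm, ← Real.rpow_add_one hv.ne']; simp
  rw [innerF, polP, e, show a / (H * (1 - H)) = a / (1 - H) * (1 / H) by
    rw [div_mul_div_comm, mul_one, mul_comm H]]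
  ring

theorem polP_int (a b H : ℝ) (hH : 0 < H) (hH1 : H ≠ 1) (s : ℝ) :
    IntervalIntegrable (polP a b H) volume 0 s ∧
    ∫ v in (0:ℝ)..s, polP a b H v =
      (s ^ H / (H * (1 - H)) - a ^ (1 - H) * Real.Gamma H / (1 - H) * s +
          (H * b + a) / (H * (1 - H) * (H + 1)) * s ^ (H + 1) -
          (a + b) * a ^ (1 - H) * Real.Gamma H / (2 * (1 - H)) * s ^ (2 : ℕ)) := by
  have h0' : 1 - H ≠ 0 := sub_ne_zero.2 hH1.symm
  have i1 : IntervalIntegrable (fun v : ℝ => 1 / (1 - H) * v ^ (H - 1)) volume 0 s :=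
    (intervalIntegral.intervalIntegrable_rpow' (by linarith)).const_mul _
  have i2 : IntervalIntegrable (fun v : ℝ => a ^ (1 - H) * Real.Gamma H / (1 - H)) volume 0 s :=
    intervalIntegrable_const
  have i3 : IntervalIntegrable (fun v : ℝ => a ^ (1 - H) * Real.Gamma H / (1 - H) * (a + b) * v)
      volume 0 s := by
    apply Continuous.intervalIntegrable; fun_prop
  have i4 : IntervalIntegrable (fun v : ℝ => (b / (1 - H) + a / (H * (1 - H))) * v ^ H)
      volume 0 s :=
    (intervalIntegral.intervalIntegrable_rpow' (by linarith)).const_mul _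
  refine ⟨((i1.sub i2).sub i3).add i4, ?_⟩
  unfold polP
  rw [intervalIntegral.integral_add ((i1.sub i2).sub i3) i4,
    intervalIntegral.integral_sub (i1.sub i2) i3, intervalIntegral.integral_sub i1 i2,
    intervalIntegral.integral_const_mul, intervalIntegral.integral_const_mul,
    intervalIntegral.integral_const_mul, intervalIntegral.integral_const,
    integral_rpow (Or.inl (by linarith)), integral_rpow (Or.inl (by linarith)), integral_id,
    Real.zero_rpow (by linarith), Real.zero_rpow (by linarith), sub_add_cancel]
  have : H + 1 ≠ 0 := by linarith
  simp only [smul_eq_mul]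
  field_simp
  ring

theorem rpow_o (p q : ℝ) (h : q < p) :
    (fun s : ℝ => s ^ p) =o[𝓝[>] (0:ℝ)] fun s => s ^ q := by
  have hpos : ∀ᶠ v : ℝ in 𝓝[>] (0:ℝ), 0 < v := self_mem_nhdsWithin
  refine (isLittleO_iff_tendsto' ?_).2 ?_
  · filter_upwards [hpos] with v hv h0
    exact absurd h0 (by positivity)
  · have t : Tendsto (fun s : ℝ => s ^ (p - q)) (𝓝[>] (0:ℝ)) (𝓝 0) := by
      have := (Real.continuousAt_rpow_const 0 (p - q) (Or.inr (by linarith))).tendsto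
      rw [Real.zero_rpow (by linarith)] at this
      exact this.mono_left nhdsWithin_le_nhds
    refine t.congr' ?_
    filter_upwards [hpos] with v hv
    rw [Real.rpow_sub hv]

theorem stmt2
    (α1 α2 H : ℝ) (hα1 : 0 < α1) (hα2 : 0 < α2)
    (hH : H ∈ Set.Ioo (0:ℝ) 2) (hH1 : H ≠ 1)
    (A : ℝ → ℝ)
    (hA : ∀ s, A s = ∫ v in (0:ℝ)..s,
        ∫ u in Set.Iic (0:ℝ), Real.exp (α1 * u + α2 * v) * (v - u) ^ (H - 2)) :
    (fun s : ℝ => A s -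
        (s ^ H / (H * (1 - H)) - α1 ^ (1 - H) * Real.Gamma H / (1 - H) * s +
          (H * α2 + α1) / (H * (1 - H) * (H + 1)) * s ^ (H + 1) -
          (α1 + α2) * α1 ^ (1 - H) * Real.Gamma H / (2 * (1 - H)) * s ^ (2 : ℕ)))
      =o[𝓝[>] (0:ℝ)] fun s : ℝ => s ^ max 2 (H + 1) := by
  obtain ⟨h0, h2⟩ := hH
  obtain ⟨K, hK⟩ := (innerF_O α1 α2 H hα1 h0).bound
  obtain ⟨δ, hδ, hKδ⟩ := mem_nhdsGT_iff_exists_Ioo_subset.1 hK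
  have hδ : (0:ℝ) < δ := hδ
  have hbig : (fun s : ℝ => A s -
        (s ^ H / (H * (1 - H)) - α1 ^ (1 - H) * Real.Gamma H / (1 - H) * s +
          (H * α2 + α1) / (H * (1 - H) * (H + 1)) * s ^ (H + 1) -
          (α1 + α2) * α1 ^ (1 - H) * Real.Gamma H / (2 * (1 - H)) * s ^ (2 : ℕ)))
      =O[𝓝[>] (0:ℝ)] fun s : ℝ => 1 / (H + 2) * s ^ (H + 2) + 1 / 3 * s ^ (3:ℝ) := by
    refine IsBigO.of_bound K ?_
    filter_upwards [Ioo_mem_nhdsGT hδ] with s hs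
    obtain ⟨hs0, hsδ⟩ := hs
    have eA : A s = ∫ v in (0:ℝ)..s, innerF α1 α2 H v := by
      rw [hA]
      refine intervalIntegral.integral_congr_ae (ae_of_all _ ?_)
      intro v hv
      rw [Set.uIoc_of_le hs0.le] at hv
      exact inner_eq α1 α2 H hα1 h0 hH1 v hv.1
    obtain ⟨pi, pe⟩ := polP_int α1 α2 H h0 hH1 s
    rw [← pe, eA, ← intervalIntegral.integral_sub (innerF_ii α1 α2 H h0 0 s) pi]
    have r1 : IntervalIntegrable (fun v : ℝ => v ^ (H + 1)) volume 0 s :=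
      intervalIntegral.intervalIntegrable_rpow' (by linarith)
    have r2 : IntervalIntegrable (fun v : ℝ => v ^ (2:ℝ)) volume 0 s :=
      intervalIntegral.intervalIntegrable_rpow' (by norm_num)
    have e : ∫ v in (0:ℝ)..s, K * (v ^ (H + 1) + v ^ (2:ℝ)) =
        K * (1 / (H + 2) * s ^ (H + 2) + 1 / 3 * s ^ (3:ℝ)) := by
      rw [intervalIntegral.integral_const_mul, intervalIntegral.integral_add r1 r2,
        integral_rpow (Or.inl (by linarith)), integral_rpow (Or.inl (by norm_num)),
        Real.zero_rpow (by linarith), Real.zero_rpow (by norm_num),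
        show H + 1 + 1 = H + 2 by ring, show (2:ℝ) + 1 = 3 by norm_num]
      ring
    rw [Real.norm_of_nonneg (r := 1 / (H + 2) * s ^ (H + 2) + 1 / 3 * s ^ (3:ℝ)) (by positivity),
      ← e]
    refine intervalIntegral.norm_integral_le_of_norm_le hs0.le (ae_of_all _ ?_)
      ((r1.add r2).const_mul K)
    intro v hv
    have hv0 : 0 < v := hv.1
    have := hKδ ⟨hv.1, lt_of_le_of_lt hv.2 hsδ⟩
    simp only [Set.mem_setOf_eq] at this
    rwa [Real.norm_of_nonneg (r := v ^ (H + 1) + v ^ (2:ℝ)) (by positivity)] at this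
  refine hbig.trans_isLittleO (IsLittleO.add ?_ ?_)
  · exact (rpow_o _ _ (by rw [max_lt_iff]; constructor <;> linarith)).const_mul_left _
  · exact (rpow_o _ _ (by rw [max_lt_iff]; constructor <;> linarith)).const_mul_left _
end

section
/- Let $\alpha_1,\alpha_2>0$. Then, as $s\to 0^+$, $\int_0^s\int_{-\infty}^0 e^{\alpha_1 u+\alpha_2 v}\,(v-u)^{-1}\,du\,dv=-s\log s+O(s)$. -/
open MeasureTheory Filter Asymptotics Topology Real

lemma aux_F (a v : ℝ) (ha : 0 < a) (hv : 0 < v) (hv1 : v ≤ 1) :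
    |(∫ u in Set.Iic (0:ℝ), Real.exp (a * u) * (v - u)⁻¹) + Real.log v| ≤ 1 / a + a + 1 := by
  have hE : IntegrableOn (fun u => Real.exp (a * u)) (Set.Iic (0:ℝ)) := integrableOn_exp_mul_Iic ha 0
  have hmeas : Measurable (fun u : ℝ => Real.exp (a * u) * (v - u)⁻¹) := by fun_prop
  have hI : IntegrableOn (fun u => Real.exp (a * u) * (v - u)⁻¹) (Set.Iic (0:ℝ)) := by
    refine Integrable.mono' (hE.mul_const v⁻¹) hmeas.aestronglyMeasurable ?_
    refine (ae_restrict_iff' measurableSet_Iic).2 (Eventually.of_forall fun u hu => ?_)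
    have hu : u ≤ 0 := hu
    have h1 : 0 < v - u := by linarith
    rw [Real.norm_of_nonneg (by positivity)]
    gcongr
    linarith
  have hI1 : IntegrableOn (fun u => Real.exp (a * u) * (v - u)⁻¹) (Set.Iic (-1:ℝ)) :=
    hI.mono_set (Set.Iic_subset_Iic.2 (by norm_num))
  have hsplit := intervalIntegral.integral_Iic_sub_Iic hI1 hI
  have hA0 : 0 ≤ ∫ u in Set.Iic (-1:ℝ), Real.exp (a * u) * (v - u)⁻¹ := by
    refine setIntegral_nonneg measurableSet_Iic fun u hu => ?_
    have hu : u ≤ -1 := hu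
    have h1 : 0 < v - u := by linarith
    positivity
  have hE1 : IntegrableOn (fun u => Real.exp (a * u)) (Set.Iic (-1:ℝ)) := integrableOn_exp_mul_Iic ha _
  have hA1 : ∫ u in Set.Iic (-1:ℝ), Real.exp (a * u) * (v - u)⁻¹ ≤ 1 / a := by
    calc _ ≤ ∫ u in Set.Iic (-1:ℝ), Real.exp (a * u) := by
          refine setIntegral_mono_on hI1 hE1 measurableSet_Iic fun u hu => ?_
          have hu : u ≤ -1 := hu
          have h1 : (v - u)⁻¹ ≤ 1 := inv_le_one_of_one_le₀ (by linarith)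
          have := Real.exp_pos (a * u)
          nlinarith
      _ = Real.exp (a * (-1)) / a := integral_exp_mul_Iic ha _
      _ ≤ 1 / a := by
          gcongr
          exact Real.exp_le_one_iff.2 (by linarith)
  have hinv : IntervalIntegrable (fun u : ℝ => (v - u)⁻¹) volume (-1) 0 := by
    refine ContinuousOn.intervalIntegrable ?_
    intro u hu
    rw [Set.uIcc_of_le (by norm_num)] at hu
    have : v - u ≠ 0 := by linarith [hu.2]
    exact ContinuousAt.continuousWithinAt (by fun_prop (disch := assumption))
  have hJ : ∫ u in (-1:ℝ)..0, (v - u)⁻¹ = Real.log (v + 1) - Real.log v := by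
    rw [intervalIntegral.integral_comp_sub_left (fun x => x⁻¹) v, integral_inv_of_pos (by linarith) (by linarith), Real.log_div (by linarith) (by linarith)]
    simp
  have hFi : IntervalIntegrable (fun u => Real.exp (a * u) * (v - u)⁻¹) volume (-1) 0 :=
    (intervalIntegrable_iff_integrableOn_Ioc_of_le (by norm_num)).2
      (hI.mono_set Set.Ioc_subset_Iic_self)
  have hB : |∫ u in (-1:ℝ)..0, (Real.exp (a * u) * (v - u)⁻¹ - (v - u)⁻¹)| ≤ a := by
    have := intervalIntegral.norm_integral_le_of_norm_le_const (a := -1) (b := 0) (C := a)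
      (f := fun u => (Real.exp (a * u) * (v - u)⁻¹ - (v - u)⁻¹)) ?_
    · simpa using this
    intro u hu
    rw [Set.uIoc_of_le (by norm_num)] at hu
    obtain ⟨h0, h1⟩ := hu
    have h2 : 0 < v - u := by linarith
    have h3 := Real.add_one_le_exp (a * u)
    have h4 : Real.exp (a * u) ≤ 1 := Real.exp_le_one_iff.2 (by nlinarith)
    have h5 : Real.exp (a * u) * (v - u)⁻¹ - (v - u)⁻¹ = (Real.exp (a * u) - 1) / (v - u) := by
      field_simp
    rw [h5, Real.norm_eq_abs, abs_div, abs_of_pos h2, div_le_iff₀ h2, abs_le]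
    constructor <;> nlinarith
  rw [intervalIntegral.integral_sub hFi hinv, hJ] at hB
  have hl0 : 0 ≤ Real.log (v + 1) := Real.log_nonneg (by linarith)
  have hl1 : Real.log (v + 1) ≤ 1 := by
    have := Real.log_le_sub_one_of_pos (show 0 < v + 1 by linarith)
    linarith
  rw [abs_le] at hB ⊢
  have : 0 < 1 / a := by positivity
  constructor <;> linarith [hB.1, hB.2]

lemma aux_G (a b v : ℝ) (ha : 0 < a) (hb : 0 < b) (hv : 0 < v) (hv1 : v ≤ 1) :
    |(∫ u in Set.Iic (0:ℝ), Real.exp (a * u + b * v) * (v - u)⁻¹) + Real.log v|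
      ≤ Real.exp b * (1 / a + a + 1) + b * Real.exp b := by
  have hF := aux_F a v ha hv hv1
  have h1 : (∫ u in Set.Iic (0:ℝ), Real.exp (a * u + b * v) * (v - u)⁻¹)
      = Real.exp (b * v) * ∫ u in Set.Iic (0:ℝ), Real.exp (a * u) * (v - u)⁻¹ := by
    rw [← integral_const_mul]
    congr 1
    ext u
    rw [Real.exp_add]; ring
  rw [h1]
  set F := ∫ u in Set.Iic (0:ℝ), Real.exp (a * u) * (v - u)⁻¹
  have h2 : Real.exp (b * v) * F + Real.log v
      = Real.exp (b * v) * (F + Real.log v) - (Real.exp (b * v) - 1) * Real.log v := by ring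
  have h3 : Real.exp (b * v) ≤ Real.exp b := Real.exp_le_exp.2 (by nlinarith)
  have h4 : 1 ≤ Real.exp (b * v) := Real.one_le_exp (by positivity)
  have h5 : Real.exp (b * v) - 1 ≤ b * Real.exp b * v := by
    have h6 := Real.add_one_le_exp (-(b * v))
    have h7 : Real.exp (b * v) * Real.exp (-(b * v)) = 1 := by rw [← Real.exp_add]; simp
    have : b * v * Real.exp (b * v) ≤ b * v * Real.exp b := by gcongr
    nlinarith
  have h8 := (Real.abs_log_mul_self_lt v hv hv1).le
  rw [abs_mul, abs_of_pos hv] at h8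
  rw [h2]
  refine (abs_sub _ _).trans ?_
  rw [abs_mul, abs_mul, abs_of_pos (Real.exp_pos _), abs_of_nonneg (sub_nonneg.2 h4)]
  have h9 : (Real.exp (b * v) - 1) * |Real.log v| ≤ b * Real.exp b * v * |Real.log v| := by gcongr
  have h10 : b * Real.exp b * (|Real.log v| * v) ≤ b * Real.exp b * 1 := by gcongr
  have h11 : Real.exp (b * v) * |F + Real.log v| ≤ Real.exp b * (1 / a + a + 1) := by gcongr
  linarith

/-- Short-time expansion of the double integral in the boundary case `H = 1`:
`∫₀ˢ ∫_{-∞}^0 e^{α₁u+α₂v}(v-u)⁻¹ du dv = -s log s + O(s)` as `s → 0⁺`. -/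
theorem stmt3
    (α1 α2 : ℝ) (hα1 : 0 < α1) (hα2 : 0 < α2) :
    (fun s : ℝ =>
        (∫ v in (0:ℝ)..s, ∫ u in Set.Iic (0:ℝ),
            Real.exp (α1 * u + α2 * v) * (v - u)⁻¹) + s * Real.log s)
      =O[𝓝[>] (0:ℝ)] fun s : ℝ => s := by
  set G : ℝ → ℝ := fun v => ∫ u in Set.Iic (0:ℝ), Real.exp (α1 * u + α2 * v) * (v - u)⁻¹ with hG
  set C := Real.exp α2 * (1 / α1 + α1 + 1) + α2 * Real.exp α2 with hC
  have hGm : StronglyMeasurable G := by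
    refine StronglyMeasurable.integral_prod_right
      (f := fun v u => Real.exp (α1 * u + α2 * v) * (v - u)⁻¹) ?_
    refine Measurable.stronglyMeasurable ?_
    unfold Function.uncurry
    fun_prop
  refine IsBigO.of_bound (C + 1) ?_
  filter_upwards [Ioc_mem_nhdsGT (show (0:ℝ) < 1 by norm_num)] with s hs
  obtain ⟨hs0, hs1⟩ := hs
  have hbd : ∀ v ∈ Set.uIoc 0 s, ‖G v + Real.log v‖ ≤ C := by
    intro v hv
    rw [Set.uIoc_of_le hs0.le] at hv
    exact aux_G α1 α2 v hα1 hα2 hv.1 (hv.2.trans hs1)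
  have hlog : IntervalIntegrable Real.log volume 0 s := intervalIntegral.intervalIntegrable_log'
  have hGl : IntervalIntegrable (fun v => G v + Real.log v) volume 0 s := by
    refine IntervalIntegrable.mono_fun' (g := fun _ => C) intervalIntegrable_const ?_ ?_
    · exact (hGm.add Real.measurable_log.stronglyMeasurable).aestronglyMeasurable
    · exact (ae_restrict_iff' measurableSet_uIoc).2 (Eventually.of_forall hbd)
  have h1 := intervalIntegral.integral_sub hGl hlog
  simp only [add_sub_cancel_right] at h1
  have h2 := intervalIntegral.norm_integral_le_of_norm_le_const hbd
  rw [sub_zero, abs_of_pos hs0] at h2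
  change ‖(∫ v in (0:ℝ)..s, G v) + s * Real.log s‖ ≤ _
  rw [h1, integral_log]
  rw [Real.norm_eq_abs] at *
  rw [Real.norm_of_nonneg hs0.le]
  rw [abs_le] at *
  simp only [zero_mul, sub_zero, Real.log_zero]
  constructor <;> linarith [h2.1, h2.2]
end

section
/- Let $\alpha_1,\alpha_2>0$ and $H\in(0,2)$ with $H\neq 1$. Then, as $s\to 0^+$, $\frac{2C_0-r_{12}(s)-r_{21}(s)}{\nu_1\nu_2\,s^{H}}=\rho+O\big(s^{\min\{1,\,2-H\}}\big)$. -/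
open MeasureTheory Filter Asymptotics Topology Real

lemma aux_shift (a H v : ℝ) :
    ∫ u in Set.Iic (0:ℝ), Real.exp (a * u) * (v - u) ^ (H - 2)
      = Real.exp (a * v) * ∫ t in Set.Ioi v, t ^ (H - 2) * Real.exp (-a * t) := by
  rw [← integral_Ici_eq_integral_Ioi, ← integral_indicator measurableSet_Ici,
    ← integral_indicator measurableSet_Iic, ← integral_const_mul,
    ← integral_sub_left_eq_self (fun x => rexp (a * v) *
      (Set.Ici v).indicator (fun t => t ^ (H - 2) * rexp (-a * t)) x) volume v]
  refine integral_congr_ae (Eventually.of_forall fun u => ?_)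
  by_cases hu : u ≤ 0
  · have h2 : v - u ∈ Set.Ici v := by simp [hu]
    have h1 : u ∈ Set.Iic (0:ℝ) := hu
    simp only [Set.indicator_of_mem h1, Set.indicator_of_mem h2]
    rw [show a * u = a * v + -a * (v - u) by ring, Real.exp_add]
    ring
  · have h2 : v - u ∉ Set.Ici v := by simpa using hu
    have h1 : u ∉ Set.Iic (0:ℝ) := hu
    simp only [Set.indicator_of_notMem h1, Set.indicator_of_notMem h2, mul_zero]

lemma aux_int1 {a H : ℝ} (ha : 0 < a) (hH : 0 < H) :
    IntegrableOn (fun t : ℝ => t ^ (H - 1) * Real.exp (-a * t)) (Set.Ioi 0) := by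
  have := integrableOn_rpow_mul_exp_neg_mul_rpow (s := H - 1) (p := 1) (b := a)
    (by linarith) one_pos ha
  simpa using this

lemma aux_int2 {a H v : ℝ} (ha : 0 < a) (hH : 0 < H) (hv : 0 < v) :
    IntegrableOn (fun t : ℝ => t ^ (H - 2) * Real.exp (-a * t)) (Set.Ioi v) := by
  have h1 : IntegrableOn (fun t : ℝ => t ^ (H - 1) * Real.exp (-a * t)) (Set.Ioi v) :=
    (aux_int1 ha hH).mono_set (Set.Ioi_subset_Ioi hv.le)
  refine Integrable.mono' (h1.const_mul (1 / v)) ?_ ?_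
  · exact (by fun_prop : Measurable fun t : ℝ => t ^ (H - 2) * Real.exp (-a * t)).aestronglyMeasurable
  · refine (ae_restrict_iff' measurableSet_Ioi).2 (Eventually.of_forall fun t ht => ?_)
    have ht' : v < t := ht
    have ht0 : 0 < t := hv.trans ht'
    have hp : t ^ (H - 1) = t ^ (H - 2) * t := by
      rw [← Real.rpow_add_one ht0.ne']; congr 1; ring
    have : 0 < t ^ (H - 2) := Real.rpow_pos_of_pos ht0 _
    rw [Real.norm_of_nonneg (by positivity), hp]
    have h3 : 1 ≤ t / v := (one_le_div hv).2 ht'.le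
    calc t ^ (H - 2) * rexp (-a * t) = t ^ (H - 2) * rexp (-a * t) * 1 := by ring
      _ ≤ t ^ (H - 2) * rexp (-a * t) * (t / v) := by gcongr
      _ = _ := by ring

lemma aux_G_s6 {a H v : ℝ} (ha : 0 < a) (hH : 0 < H) (hv : 0 < v) :
    (H - 1) * ∫ u in Set.Iic (0:ℝ), Real.exp (a * u) * (v - u) ^ (H - 2)
      = -v ^ (H - 1) + a * Real.exp (a * v) *
        (a ^ (-H) * Real.Gamma H - ∫ t in (0:ℝ)..v, t ^ (H - 1) * Real.exp (-a * t)) := by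
  have h1 := aux_int1 ha hH
  have h1v : IntegrableOn (fun t : ℝ => t ^ (H - 1) * Real.exp (-a * t)) (Set.Ioi v) :=
    h1.mono_set (Set.Ioi_subset_Ioi hv.le)
  have h2 := aux_int2 ha hH hv
  have key := integral_Ioi_of_hasDerivAt_of_tendsto' (a := v) (m := 0)
    (f := fun t : ℝ => t ^ (H - 1) * Real.exp (-a * t))
    (f' := fun t : ℝ => (H - 1) * (t ^ (H - 2) * Real.exp (-a * t))
      - a * (t ^ (H - 1) * Real.exp (-a * t)))
    (by
      intro t ht
      have ht0 : 0 < t := hv.trans_le ht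
      have d1 := Real.hasDerivAt_rpow_const (x := t) (p := H - 1) (Or.inl ht0.ne')
      have d2 : HasDerivAt (fun t : ℝ => Real.exp (-a * t)) (Real.exp (-a * t) * -a) t := by
        simpa using ((hasDerivAt_id t).const_mul (-a)).exp
      have d3 := d1.mul d2
      rw [show H - 1 - 1 = H - 2 by ring] at d3
      exact d3.congr_deriv (by ring))
    ((h2.const_mul _).sub (h1v.const_mul _))
    (tendsto_rpow_mul_exp_neg_mul_atTop_nhds_zero _ _ ha)
  rw [integral_sub (h2.const_mul _) (h1v.const_mul _), integral_const_mul,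
    integral_const_mul] at key
  have hs := intervalIntegral.integral_Ioi_sub_Ioi h1 hv.le
  have hG := Real.integral_rpow_mul_exp_neg_mul_Ioi hH ha
  have hG' : ∫ t in Set.Ioi (0:ℝ), t ^ (H - 1) * Real.exp (-a * t) = a ^ (-H) * Real.Gamma H := by
    rw [Real.rpow_neg ha.le, ← Real.inv_rpow ha.le, ← one_div, ← hG]
    simp
  rw [hG'] at hs
  rw [aux_shift, ← hs]
  have he : Real.exp (a * v) * Real.exp (-a * v) = 1 := by
    rw [← Real.exp_add]; simp
  linear_combination Real.exp (a * v) * key - v ^ (H - 1) * he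

lemma aux_expm1 {c v : ℝ} (hc : 0 < c) (hv : 0 < v) (hv1 : v ≤ 1) :
    |Real.exp (c * v) - 1| ≤ c * Real.exp c * v := by
  have h0 : 0 < c * v := by positivity
  have h1 : 1 ≤ Real.exp (c * v) := Real.one_le_exp h0.le
  rw [abs_of_nonneg (by linarith)]
  have h2 := Real.add_one_le_exp (-(c * v))
  have h3 : Real.exp (-(c * v)) * Real.exp (c * v) = 1 := by rw [← Real.exp_add]; simp
  have h4 : Real.exp (c * v) ≤ Real.exp c := Real.exp_le_exp.2 (by nlinarith)
  have h5 : Real.exp (c * v) - 1 ≤ c * v * Real.exp (c * v) := by nlinarith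
  nlinarith

lemma aux_gamma {a H v : ℝ} (ha : 0 < a) (hH : 0 < H) (hv : 0 < v) :
    |∫ t in (0:ℝ)..v, t ^ (H - 1) * Real.exp (-a * t)| ≤ v ^ H / H := by
  have h := intervalIntegral.norm_integral_le_of_norm_le (μ := volume) (a := 0) (b := v)
    (f := fun t : ℝ => t ^ (H - 1) * Real.exp (-a * t)) (g := fun t => t ^ (H - 1)) hv.le
    (Eventually.of_forall fun t ht => by
      have h0 : 0 < t := ht.1
      have h1 : 0 < t ^ (H - 1) := Real.rpow_pos_of_pos h0 _
      rw [Real.norm_of_nonneg (by positivity)]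
      have : Real.exp (-a * t) ≤ 1 := Real.exp_le_one_iff.2 (by nlinarith)
      nlinarith)
    (intervalIntegral.intervalIntegrable_rpow' (by linarith))
  rw [integral_rpow (Or.inl (by linarith)), Real.norm_eq_abs] at h
  simpa [Real.zero_rpow hH.ne'] using h

lemma aux_I {a b H : ℝ} (ha : 0 < a) (hb : 0 < b) (hH : 0 < H) :
    ∃ C, 0 ≤ C ∧ ∀ s, 0 < s → s ≤ 1 →
      |(H - 1) * (∫ v in (0:ℝ)..s, Real.exp (b * v) *
        ∫ u in Set.Iic (0:ℝ), Real.exp (a * u) * (v - u) ^ (H - 2))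
        + s ^ H / H - a ^ (1 - H) * Real.Gamma H * s| ≤ C * (s ^ (2:ℝ) + s ^ (H + 1)) := by
  set K := a ^ (1 - H) * Real.Gamma H with hK
  have hK0 : 0 < K := mul_pos (Real.rpow_pos_of_pos ha _) (Real.Gamma_pos_of_pos hH)
  set γ : ℝ → ℝ := fun v => ∫ t in (0:ℝ)..v, t ^ (H - 1) * Real.exp (-a * t) with hγ
  have hii : ∀ x y, IntervalIntegrable (fun t : ℝ => t ^ (H - 1)) volume x y :=
    fun x y => intervalIntegral.intervalIntegrable_rpow' (by linarith)
  have hγc : Continuous γ := intervalIntegral.continuous_primitive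
    (fun x y => (hii x y).mul_continuousOn (by fun_prop)) 0
  set E : ℝ → ℝ := fun v => (Real.exp (b * v) - 1) * (-v ^ (H - 1))
    + K * (Real.exp ((a + b) * v) - 1) - a * Real.exp ((a + b) * v) * γ v with hE
  have hEi : ∀ x y, IntervalIntegrable E volume x y := by
    intro x y
    refine IntervalIntegrable.sub (IntervalIntegrable.add ?_ ?_) ?_
    · exact (hii x y).neg.continuousOn_mul (by fun_prop)
    · exact Continuous.intervalIntegrable (by fun_prop) _ _
    · exact Continuous.intervalIntegrable (by fun_prop) _ _
  set C1 := b * Real.exp b + a * Real.exp (a + b) / H with hC1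
  set C2 := K * ((a + b) * Real.exp (a + b)) with hC2
  have hC1p : 0 < C1 := by positivity
  have hC2p : 0 < C2 := by positivity
  have hEb : ∀ v, 0 < v → v ≤ 1 → |E v| ≤ C1 * v ^ H + C2 * v := by
    intro v hv hv1
    have e1 := aux_expm1 hb hv hv1
    have e2 := aux_expm1 (add_pos ha hb) hv hv1
    have e3 := aux_gamma ha hH hv
    have e4 : Real.exp ((a + b) * v) ≤ Real.exp (a + b) := Real.exp_le_exp.2 (by nlinarith)
    have hp : v ^ H = v ^ (H - 1) * v := by
      rw [← Real.rpow_add_one hv.ne']; congr 1; ring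
    have hp0 : 0 < v ^ (H - 1) := Real.rpow_pos_of_pos hv _
    have hpH : 0 < v ^ H := Real.rpow_pos_of_pos hv _
    calc |E v| ≤ |(Real.exp (b * v) - 1) * (-v ^ (H - 1))|
          + |K * (Real.exp ((a + b) * v) - 1)| + |a * Real.exp ((a + b) * v) * γ v| :=
          (abs_sub _ _).trans (by gcongr; exact abs_add_le _ _)
      _ = |Real.exp (b * v) - 1| * v ^ (H - 1) + K * |Real.exp ((a + b) * v) - 1|
          + a * Real.exp ((a + b) * v) * |γ v| := by
          rw [abs_mul (rexp (b * v) - 1), abs_mul K, abs_mul (a * rexp ((a + b) * v)), abs_neg,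
            abs_of_pos hp0, abs_of_pos hK0,
            abs_of_pos (show 0 < a * Real.exp ((a + b) * v) by positivity)]
      _ ≤ (b * Real.exp b * v) * v ^ (H - 1) + K * ((a + b) * Real.exp (a + b) * v)
          + a * Real.exp (a + b) * (v ^ H / H) := by gcongr
      _ = C1 * v ^ H + C2 * v := by rw [hC1, hC2, hp]; ring
  refine ⟨C1 / (H + 1) + C2 / 2, by positivity, fun s hs hs1 => ?_⟩
  have hcong : (H - 1) * (∫ v in (0:ℝ)..s, Real.exp (b * v) *
        ∫ u in Set.Iic (0:ℝ), Real.exp (a * u) * (v - u) ^ (H - 2))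
      = ∫ v in (0:ℝ)..s, ((-v ^ (H - 1) + K) + E v) := by
    rw [← intervalIntegral.integral_const_mul]
    refine intervalIntegral.integral_congr_ae (Eventually.of_forall fun v hv => ?_)
    rw [Set.uIoc_of_le hs.le] at hv
    have := aux_G_s6 ha hH hv.1
    have haK : a * (a ^ (-H) * Real.Gamma H) = K := by
      rw [hK, ← mul_assoc, mul_comm a, ← Real.rpow_add_one ha.ne']
      congr 2; ring
    simp only [hE, hγ]
    rw [add_mul a b v, Real.exp_add]
    linear_combination Real.exp (b * v) * this + Real.exp (a * v) * Real.exp (b * v) * haK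
  have hmain : ∫ v in (0:ℝ)..s, ((-v ^ (H - 1) + K) + E v)
      = -(s ^ H / H) + K * s + ∫ v in (0:ℝ)..s, E v := by
    have hn : IntervalIntegrable (fun v : ℝ => -v ^ (H - 1)) volume 0 s := (hii 0 s).neg
    have hk : IntervalIntegrable (fun _ : ℝ => K) volume 0 s :=
      continuous_const.intervalIntegrable _ _
    rw [intervalIntegral.integral_add (hn.add hk) (hEi 0 s),
      intervalIntegral.integral_add hn hk, intervalIntegral.integral_neg,
      integral_rpow (Or.inl (by linarith))]
    simp [Real.zero_rpow hH.ne', mul_comm]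
  have hb' := intervalIntegral.norm_integral_le_of_norm_le (μ := volume) (a := 0) (b := s)
    (f := E) (g := fun v => C1 * v ^ H + C2 * v) hs.le
    (Eventually.of_forall fun t ht => hEb t ht.1 (ht.2.trans hs1))
    (((intervalIntegral.intervalIntegrable_rpow' (by linarith)).const_mul _).add
      (Continuous.intervalIntegrable (by fun_prop) _ _))
  rw [intervalIntegral.integral_add
    ((intervalIntegral.intervalIntegrable_rpow' (by linarith)).const_mul _)
      (Continuous.intervalIntegrable (by fun_prop) _ _),
    intervalIntegral.integral_const_mul, intervalIntegral.integral_const_mul,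
    integral_rpow (Or.inl (by linarith)), integral_id,
    Real.zero_rpow (by linarith), Real.norm_eq_abs] at hb'
  rw [hcong, hmain]
  have hs2 : s ^ (2:ℝ) = s ^ 2 := by norm_cast
  have hsp : 0 < s ^ (H + 1) := Real.rpow_pos_of_pos hs _
  rw [hs2]
  calc |-(s ^ H / H) + K * s + (∫ v in (0:ℝ)..s, E v) + s ^ H / H - K * s|
      = |∫ v in (0:ℝ)..s, E v| := by congr 1; ring
    _ ≤ _ := hb'
    _ = C1 / (H + 1) * s ^ (H + 1) + C2 / 2 * s ^ 2 := by ring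
    _ ≤ _ := by
      have : 0 < C1 / (H + 1) * s ^ 2 := by positivity
      have : 0 < C2 / 2 * s ^ (H + 1) := by positivity
      linarith

lemma aux_expneg {x : ℝ} (hx : 0 < x) : |Real.exp (-x) - 1 + x| ≤ x ^ 2 := by
  have h1 := Real.add_one_le_exp (-x)
  have h2 := Real.add_one_le_exp x
  have h3 : Real.exp (-x) * Real.exp x = 1 := by rw [← Real.exp_add]; simp
  have h4 := Real.exp_pos (-x)
  rw [abs_of_nonneg (by linarith)]
  have h5 : Real.exp (-x) * (x + 1) ≤ 1 := by nlinarith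
  nlinarith

/-- One-sided expansion. -/
lemma aux_r {a b H : ℝ} (ha : 0 < a) (hb : 0 < b) (hH : 0 < H) :
    ∃ C, 0 ≤ C ∧ ∀ s, 0 < s → s ≤ 1 →
      |Real.exp (-b * s) * ((H - 1) * (∫ v in (0:ℝ)..s, Real.exp (b * v) *
        ∫ u in Set.Iic (0:ℝ), Real.exp (a * u) * (v - u) ^ (H - 2)))
        + s ^ H / H - a ^ (1 - H) * Real.Gamma H * s| ≤ C * (s ^ (2:ℝ) + s ^ (H + 1)) := by
  obtain ⟨C, hC, h⟩ := aux_I ha hb hH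
  have hK0 : 0 < a ^ (1 - H) * Real.Gamma H :=
    mul_pos (Real.rpow_pos_of_pos ha _) (Real.Gamma_pos_of_pos hH)
  generalize a ^ (1 - H) * Real.Gamma H = K at *
  refine ⟨C + b / H + b * K, by positivity, fun s hs hs1 => ?_⟩
  have h := h s hs hs1
  generalize (H - 1) * (∫ v in (0:ℝ)..s, Real.exp (b * v) *
        ∫ u in Set.Iic (0:ℝ), Real.exp (a * u) * (v - u) ^ (H - 2)) = J at *
  have hs2 : s ^ (2:ℝ) = s ^ 2 := by norm_cast
  have hp : s ^ (H + 1) = s ^ H * s := Real.rpow_add_one hs.ne' _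
  have hsH : 0 < s ^ H := Real.rpow_pos_of_pos hs _
  rw [hs2, hp] at h
  rw [hs2, hp]
  have e1 : Real.exp (-b * s) ≤ 1 := Real.exp_le_one_iff.2 (by nlinarith)
  have e2 := Real.add_one_le_exp (-b * s)
  have e0 := Real.exp_pos (-b * s)
  generalize Real.exp (-b * s) = e at *
  have e3 : |1 - e| ≤ b * s := by rw [abs_of_nonneg (by linarith)]; linarith
  have e4 : |s ^ H / H - K * s| ≤ s ^ H / H + K * s := by
    refine (abs_sub _ _).trans (le_of_eq ?_)
    rw [abs_of_pos (by positivity), abs_of_pos (by positivity)]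
  calc |e * J + s ^ H / H - K * s|
      = |e * (J + s ^ H / H - K * s) + (1 - e) * (s ^ H / H - K * s)| := by congr 1; ring
    _ ≤ |e| * |J + s ^ H / H - K * s| + |1 - e| * |s ^ H / H - K * s| := by
        rw [← abs_mul, ← abs_mul]; exact abs_add_le _ _
    _ ≤ 1 * (C * (s ^ 2 + s ^ H * s)) + (b * s) * (s ^ H / H + K * s) := by
        rw [abs_of_pos e0]; gcongr
    _ ≤ _ := by
        have : 0 < b / H * s ^ 2 := by positivity
        have : 0 < b * K * (s ^ H * s) := by positivity
        have : (C + b / H + b * K) * (s ^ 2 + s ^ H * s) -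
          (1 * (C * (s ^ 2 + s ^ H * s)) + (b * s) * (s ^ H / H + K * s)) =
          b / H * s ^ 2 + b * K * (s ^ H * s) := by ring
        linarith

/-- The `ρ`-formula of Lemma 3.12: as `s → 0⁺`,
`(2C₀ - r₁₂(s) - r₂₁(s)) / (ν₁ν₂ s^H) = ρ + O(s^{min(1, 2-H)})`. -/
theorem stmt6
    (α1 α2 ν1 ν2 H ρ η : ℝ)
    (hα1 : 0 < α1) (hα2 : 0 < α2) (hν1 : 0 < ν1) (hν2 : 0 < ν2)
    (hH : H ∈ Set.Ioo (0:ℝ) 2) (hH1 : H ≠ 1)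
    (C0 : ℝ)
    (hC0 : C0 = Real.Gamma (H + 1) * ν1 * ν2 / (2 * (α1 + α2)) *
      ((α1 ^ (1 - H) + α2 ^ (1 - H)) * ρ + (α2 ^ (1 - H) - α1 ^ (1 - H)) * η))
    (I12 I21 : ℝ → ℝ)
    (hI12 : ∀ s, I12 s =
      ∫ v in (0:ℝ)..s, Real.exp (α2 * v) *
        ∫ u in Set.Iic (0:ℝ), Real.exp (α1 * u) * (v - u) ^ (H - 2))
    (hI21 : ∀ s, I21 s =
      ∫ v in (0:ℝ)..s, Real.exp (α1 * v) *
        ∫ u in Set.Iic (0:ℝ), Real.exp (α2 * u) * (v - u) ^ (H - 2))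
    (r12 r21 : ℝ → ℝ)
    (hr12 : ∀ s, r12 s = Real.exp (-α2 * s) * C0 +
      ν1 * ν2 * Real.exp (-α2 * s) * (H * (H - 1)) * ((ρ - η) / 2) * I12 s)
    (hr21 : ∀ s, r21 s = Real.exp (-α1 * s) * C0 +
      ν1 * ν2 * Real.exp (-α1 * s) * (H * (H - 1)) * ((ρ + η) / 2) * I21 s) :
    (fun s : ℝ => (2 * C0 - r12 s - r21 s) / (ν1 * ν2 * s ^ H) - ρ)
      =O[𝓝[>] (0:ℝ)] fun s : ℝ => s ^ min 1 (2 - H) := by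
  obtain ⟨hH0, hH2⟩ := hH
  obtain ⟨A, hA, hA'⟩ := aux_r hα1 hα2 hH0
  obtain ⟨B, hB, hB'⟩ := aux_r hα2 hα1 hH0
  have hG : Real.Gamma (H + 1) = H * Real.Gamma H := Real.Gamma_add_one hH0.ne'
  set M := |C0| * (α1 ^ 2 + α2 ^ 2) + ν1 * ν2 * H * |(ρ - η) / 2| * A
    + ν1 * ν2 * H * |(ρ + η) / 2| * B with hM
  have hM0 : 0 ≤ M := by positivity
  refine IsBigO.of_bound (2 * M / (ν1 * ν2)) ?_
  filter_upwards [Ioc_mem_nhdsGT (zero_lt_one' ℝ)] with s hs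
  obtain ⟨hs, hs1⟩ := hs
  have hA := hA' s hs hs1
  have hB := hB' s hs hs1
  rw [← hI12 s] at hA
  rw [← hI21 s] at hB
  have hsH : 0 < s ^ H := Real.rpow_pos_of_pos hs _
  have x1 := aux_expneg (mul_pos hα1 hs)
  have x2 := aux_expneg (mul_pos hα2 hs)
  rw [← neg_mul] at x1 x2
  set D1 := Real.exp (-α2 * s) * ((H - 1) * I12 s) + s ^ H / H - α1 ^ (1 - H) * Real.Gamma H * s
    with hD1
  set D2 := Real.exp (-α1 * s) * ((H - 1) * I21 s) + s ^ H / H - α2 ^ (1 - H) * Real.Gamma H * s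
    with hD2
  set X1 := Real.exp (-α1 * s) - 1 + α1 * s with hX1
  set X2 := Real.exp (-α2 * s) - 1 + α2 * s with hX2
  have hlin : C0 * (α1 + α2) = H * Real.Gamma H * ν1 * ν2 / 2 *
      ((α1 ^ (1 - H) + α2 ^ (1 - H)) * ρ + (α2 ^ (1 - H) - α1 ^ (1 - H)) * η) := by
    rw [hC0, hG]; field_simp
  have hHH : H * (s ^ H / H) = s ^ H := by field_simp
  have hnum : 2 * C0 - r12 s - r21 s - ν1 * ν2 * s ^ H * ρ
      = -(C0 * X1) - C0 * X2 - ν1 * ν2 * H * ((ρ - η) / 2) * D1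
        - ν1 * ν2 * H * ((ρ + η) / 2) * D2 := by
    rw [hr12, hr21, hX1, hX2, hD1, hD2]
    linear_combination s * hlin + ν1 * ν2 * ρ * hHH
  set T := s ^ (2:ℝ) + s ^ (H + 1) with hT
  have hsq : s ^ 2 ≤ T := by
    have h1 : s ^ (2:ℝ) = s ^ 2 := by norm_cast
    have := Real.rpow_pos_of_pos hs (H + 1)
    rw [hT, h1]
    linarith
  have hbound : |2 * C0 - r12 s - r21 s - ν1 * ν2 * s ^ H * ρ| ≤ M * T := by
    rw [hnum]
    calc _ ≤ |C0 * X1| + |C0 * X2| + |ν1 * ν2 * H * ((ρ - η) / 2) * D1|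
          + |ν1 * ν2 * H * ((ρ + η) / 2) * D2| := by
          refine (abs_sub _ _).trans ?_
          gcongr
          refine (abs_sub _ _).trans ?_
          gcongr
          refine (abs_sub _ _).trans ?_
          rw [abs_neg]
      _ = |C0| * |X1| + |C0| * |X2| + ν1 * ν2 * H * |(ρ - η) / 2| * |D1|
          + ν1 * ν2 * H * |(ρ + η) / 2| * |D2| := by
          have : 0 < ν1 * ν2 * H := by positivity
          simp only [abs_mul, abs_of_pos hν1, abs_of_pos hν2, abs_of_pos hH0]
      _ ≤ |C0| * (α1 * s) ^ 2 + |C0| * (α2 * s) ^ 2 + ν1 * ν2 * H * |(ρ - η) / 2| * (A * T)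
          + ν1 * ν2 * H * |(ρ + η) / 2| * (B * T) := by gcongr
      _ = |C0| * (α1 ^ 2 + α2 ^ 2) * s ^ 2 + ν1 * ν2 * H * |(ρ - η) / 2| * A * T
          + ν1 * ν2 * H * |(ρ + η) / 2| * B * T := by ring
      _ ≤ |C0| * (α1 ^ 2 + α2 ^ 2) * T + ν1 * ν2 * H * |(ρ - η) / 2| * A * T
          + ν1 * ν2 * H * |(ρ + η) / 2| * B * T := by gcongr
      _ = M * T := by rw [hM]; ring
  have hTm : T ≤ 2 * s ^ min 1 (2 - H) * s ^ H := by
    rw [mul_assoc, ← Real.rpow_add hs, hT, two_mul]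
    gcongr ?_ + ?_
    · exact Real.rpow_le_rpow_of_exponent_ge hs hs1 (by linarith [min_le_right 1 (2 - H)])
    · exact Real.rpow_le_rpow_of_exponent_ge hs hs1 (by linarith [min_le_left 1 (2 - H)])
  have hν : 0 < ν1 * ν2 := by positivity
  have hm : 0 < s ^ min 1 (2 - H) := Real.rpow_pos_of_pos hs _
  have heq : (2 * C0 - r12 s - r21 s) / (ν1 * ν2 * s ^ H) - ρ
      = (2 * C0 - r12 s - r21 s - ν1 * ν2 * s ^ H * ρ) / (ν1 * ν2 * s ^ H) := by
    field_simp
  rw [heq, Real.norm_eq_abs, Real.norm_eq_abs, abs_div, abs_of_pos hm,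
    abs_of_pos (mul_pos hν hsH), div_le_iff₀ (mul_pos hν hsH)]
  calc _ ≤ M * T := hbound
    _ ≤ M * (2 * s ^ min 1 (2 - H) * s ^ H) := by gcongr
    _ = _ := by field_simp
end

section
/- Let $\alpha,\nu>0$ and $H\in(0,1)$ with $H\neq 1/2$. Define $r(s)=\nu^{2}\,\frac{\Gamma(2H+1)\sin(\pi H)}{2\pi}\int_{-\infty}^{\infty}\cos(sx)\,\frac{|x|^{1-2H}}{\alpha^{2}+x^{2}}\,dx$ and $V=\nu^{2}\,\frac{\Gamma(2H+1)}{2\alpha^{2H}}$. Then, as $s\to 0^{+}$, $r(s)=V-\frac{\nu^{2}}{2}\,s^{2H}+\frac{\alpha^{2}}{2}\,V\,s^{2}-\frac{\alpha^{2}\nu^{2}}{4(H+1)(1+2H)}\,s^{2H+2}+o\big(s^{2H+2}\big)$. -/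
open MeasureTheory Filter Asymptotics Topology Real

lemma gam_int {p y : ℝ} (hp : 0 < p) (hy : 0 < y) :
    IntegrableOn (fun t : ℝ => t ^ (p - 1) * Real.exp (-(t * y))) (Set.Ioi 0) := by
  have h := integrableOn_rpow_mul_exp_neg_mul_rpow (p := 1) (s := p - 1) (b := y)
    (by linarith) one_pos hy
  refine h.congr_fun (fun t _ => ?_) measurableSet_Ioi
  simp [mul_comm]

lemma gam_val {p y : ℝ} (hp : 0 < p) (hy : 0 < y) :
    ∫ t in Set.Ioi (0:ℝ), t ^ (p - 1) * Real.exp (-(t * y)) = y ^ (-p) * Real.Gamma p := by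
  have h := Real.integral_rpow_mul_exp_neg_mul_Ioi hp hy
  rw [Real.rpow_neg hy.le, ← Real.inv_rpow hy.le, ← one_div, ← h]
  simp only [mul_comm]

lemma laplace_fub {φ L : ℝ → ℝ} (hφc : Continuous φ) (hφ : ∀ y, 0 < y → 0 ≤ φ y) {p : ℝ} (hp : 0 < p)
    (hi : ∀ t, 0 < t → IntegrableOn (fun y => φ y * Real.exp (-(t * y))) (Set.Ioi 0))
    (hL : ∀ t, 0 < t → ∫ y in Set.Ioi (0:ℝ), φ y * Real.exp (-(t * y)) = L t) :
    (IntegrableOn (fun y => φ y * y ^ (-p)) (Set.Ioi 0) ↔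
      IntegrableOn (fun t => t ^ (p - 1) * L t) (Set.Ioi 0)) ∧
    (IntegrableOn (fun t => t ^ (p - 1) * L t) (Set.Ioi 0) →
      Real.Gamma p * ∫ y in Set.Ioi (0:ℝ), φ y * y ^ (-p) =
        ∫ t in Set.Ioi (0:ℝ), t ^ (p - 1) * L t) := by
  set μ := (volume : Measure ℝ).restrict (Set.Ioi 0) with hμ
  set f : ℝ → ℝ → ℝ := fun y t => φ y * (t ^ (p - 1) * Real.exp (-(t * y))) with hf
  have hae : ∀ᵐ y ∂μ, 0 < y := ae_restrict_mem measurableSet_Ioi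
  have hm : AEStronglyMeasurable (Function.uncurry f) (μ.prod μ) := by
    apply Measurable.aestronglyMeasurable
    simp only [hf, Function.uncurry_def]
    have := hφc.measurable
    fun_prop
  have h1 : ∀ y, 0 < y → ∫ t, f y t ∂μ = Real.Gamma p * (φ y * y ^ (-p)) := by
    intro y hy
    simp only [hf]
    rw [integral_const_mul, gam_val hp hy]; ring
  have h2 : ∀ t, 0 < t → ∫ y, f y t ∂μ = t ^ (p - 1) * L t := by
    intro t ht
    rw [← hL t ht, ← integral_const_mul]
    congr 1; ext y; simp only [hf]; ring
  have hn : ∀ y t, 0 < y → 0 < t → ‖f y t‖ = f y t := by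
    intro y t hy ht
    have := hφ y hy
    exact Real.norm_of_nonneg (by simp only [hf]; positivity)
  have e1 : Integrable (Function.uncurry f) (μ.prod μ) ↔
      IntegrableOn (fun y => φ y * y ^ (-p)) (Set.Ioi 0) := by
    rw [integrable_prod_iff hm]
    have a1 : ∀ᵐ y ∂μ, Integrable (fun t => Function.uncurry f (y, t)) μ := by
      filter_upwards [hae] with y hy
      exact (gam_int hp hy).const_mul (φ y)
    rw [and_iff_right a1, IntegrableOn,
      ← integrable_const_mul_iff (c := Real.Gamma p) (isUnit_iff_ne_zero.2 (Real.Gamma_pos_of_pos hp).ne')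
        (fun y => φ y * y ^ (-p))]
    apply integrable_congr
    filter_upwards [hae] with y hy
    rw [← h1 y hy]
    apply integral_congr_ae
    filter_upwards [hae] with t ht using hn y t hy ht
  have e2 : Integrable (Function.uncurry f) (μ.prod μ) ↔
      IntegrableOn (fun t => t ^ (p - 1) * L t) (Set.Ioi 0) := by
    rw [integrable_prod_iff' hm]
    have a1 : ∀ᵐ t ∂μ, Integrable (fun y => Function.uncurry f (y, t)) μ := by
      filter_upwards [hae] with t ht
      refine ((hi t ht).const_mul (t ^ (p - 1))).congr (ae_of_all _ fun y => ?_)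
      simp only [hf, Function.uncurry]; ring
    rw [and_iff_right a1]
    apply integrable_congr
    filter_upwards [hae] with t ht
    rw [← h2 t ht]
    apply integral_congr_ae
    filter_upwards [hae] with y hy using hn y t hy ht
  refine ⟨e1.symm.trans e2, fun h => ?_⟩
  have sw := integral_integral_swap (e2.2 h)
  rw [← integral_const_mul]
  calc _ = ∫ y, ∫ t, f y t ∂μ ∂μ := by
        apply integral_congr_ae
        filter_upwards [hae] with y hy using (h1 y hy).symm
    _ = _ := sw
    _ = _ := by
        apply integral_congr_ae
        filter_upwards [hae] with y hy using (h2 y hy)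

lemma beta_lin {p : ℝ} (hp : 0 < p) (hp1 : p < 1) :
    IntegrableOn (fun t : ℝ => t ^ (p - 1) * (1 + t)⁻¹) (Set.Ioi 0) ∧
    ∫ t in Set.Ioi (0:ℝ), t ^ (p - 1) * (1 + t)⁻¹ = π / Real.sin (π * p) := by
  have hi1 : ∀ t : ℝ, 0 < t → IntegrableOn (fun y : ℝ => Real.exp (-y) * Real.exp (-(t * y))) (Set.Ioi 0) := by
    intro t ht
    have := integrableOn_exp_mul_Ioi (a := -(1 + t)) (by linarith) 0
    refine this.congr_fun (fun y _ => ?_) measurableSet_Ioi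
    simp only [← Real.exp_add]; ring_nf
  have hL1 : ∀ t : ℝ, 0 < t → ∫ y in Set.Ioi (0:ℝ), Real.exp (-y) * Real.exp (-(t * y)) = (1 + t)⁻¹ := by
    intro t ht
    have := integral_exp_mul_Ioi (a := -(1 + t)) (by linarith) 0
    rw [mul_zero, Real.exp_zero, neg_div_neg_eq, one_div] at this
    rw [← this]
    refine setIntegral_congr_fun measurableSet_Ioi (fun y _ => ?_)
    simp only [← Real.exp_add]; ring_nf
  have key := laplace_fub (φ := fun y => Real.exp (-y)) (L := fun t => (1 + t)⁻¹) (by fun_prop)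
    (fun y _ => (Real.exp_pos _).le) hp hi1 hL1
  have hg := Real.GammaIntegral_convergent (s := 1 - p) (by linarith)
  rw [show 1 - p - 1 = -p by ring] at hg
  have h3 := key.1.1 hg
  refine ⟨h3, ?_⟩
  rw [← key.2 h3, ← Real.Gamma_mul_Gamma_one_sub, Real.Gamma_eq_integral (s := 1 - p) (by linarith),
    show 1 - p - 1 = -p by ring]

lemma beta_sq {H : ℝ} (hp : 0 < H) (hp1 : H < 1) :
    IntegrableOn (fun t : ℝ => t ^ (2 * H - 1) * (1 + t ^ 2)⁻¹) (Set.Ioi 0) ∧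
    ∫ t in Set.Ioi (0:ℝ), t ^ (2 * H - 1) * (1 + t ^ 2)⁻¹ = π / (2 * Real.sin (π * H)) := by
  obtain ⟨h1, h2⟩ := beta_lin hp hp1
  have e : ∀ t : ℝ, t ∈ Set.Ioi (0:ℝ) → t ^ ((2:ℝ) - 1) * ((t ^ (2:ℝ)) ^ (H - 1) * (1 + t ^ (2:ℝ))⁻¹) =
      t ^ (2 * H - 1) * (1 + t ^ 2)⁻¹ := by
    intro t ht
    have ht : 0 < t := ht
    rw [← Real.rpow_mul ht.le, ← mul_assoc, ← Real.rpow_add ht, Real.rpow_two]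
    ring_nf
  have a := (integrableOn_Ioi_comp_rpow_iff' _ (two_ne_zero)).2 h1
  refine ⟨a.congr_fun (fun t ht => ?_) measurableSet_Ioi, ?_⟩
  · exact e t ht
  · rw [← integral_comp_rpow_Ioi_of_pos (p := 2) two_pos] at h2
    simp only [smul_eq_mul, mul_assoc] at h2
    rw [integral_const_mul, setIntegral_congr_fun measurableSet_Ioi e] at h2
    rw [mul_comm 2 (Real.sin _), ← div_div, ← h2]; ring

lemma cos_lap {t : ℝ} (ht : 0 < t) :
    IntegrableOn (fun y : ℝ => Real.cos y * Real.exp (-(t * y))) (Set.Ioi 0) ∧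
    ∫ y in Set.Ioi (0:ℝ), Real.cos y * Real.exp (-(t * y)) = t / (t ^ 2 + 1) := by
  have hre : (-(t:ℂ) + Complex.I).re < 0 := by simp [ht]
  have h1 := integrableOn_exp_mul_complex_Ioi hre 0
  have h2 := integral_exp_mul_complex_Ioi hre 0
  have e : ∀ y : ℝ, (Complex.exp ((-(t:ℂ) + Complex.I) * y)).re = Real.cos y * Real.exp (-(t * y)) := by
    intro y
    rw [Complex.exp_re]; simp [mul_comm]
  refine ⟨h1.re.congr (ae_of_all _ fun y => e y), ?_⟩
  have h3 := integral_re h1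
  simp only [RCLike.re_to_complex, e] at h3
  rw [h3, h2]
  simp [Complex.div_re, Complex.normSq_apply]
  field_simp

lemma one_lap {t : ℝ} (ht : 0 < t) :
    IntegrableOn (fun y : ℝ => Real.exp (-(t * y))) (Set.Ioi 0) ∧
    ∫ y in Set.Ioi (0:ℝ), Real.exp (-(t * y)) = 1 / t := by
  have h1 := integrableOn_exp_mul_Ioi (a := -t) (by linarith) 0
  have h2 := integral_exp_mul_Ioi (a := -t) (by linarith) 0
  simp only [neg_mul] at h1 h2
  exact ⟨h1, by rw [h2]; simp⟩

lemma sq_lap {t : ℝ} (ht : 0 < t) :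
    IntegrableOn (fun y : ℝ => y ^ 2 * Real.exp (-(t * y))) (Set.Ioi 0) ∧
    ∫ y in Set.Ioi (0:ℝ), y ^ 2 * Real.exp (-(t * y)) = 2 / t ^ 3 := by
  have h1 := gam_int (p := 3) (by norm_num) ht
  have h2 := gam_val (p := 3) (by norm_num) ht
  rw [show (3:ℝ) - 1 = 2 by norm_num] at h1 h2
  simp only [Real.rpow_two, mul_comm _ t] at h1 h2
  refine ⟨h1, ?_⟩
  rw [h2, Real.rpow_neg ht.le]
  have : Real.Gamma 3 = 2 := by
    have := Real.Gamma_nat_eq_factorial 2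
    norm_num [Nat.factorial] at this ⊢
  rw [this]
  norm_cast
  field_simp

lemma int_B {H : ℝ} (hp : 0 < H) (hp1 : H < 1) :
    IntegrableOn (fun y : ℝ => (1 - Real.cos y) * y ^ (-(1 + 2 * H))) (Set.Ioi 0) ∧
    Real.Gamma (1 + 2 * H) * ∫ y in Set.Ioi (0:ℝ), (1 - Real.cos y) * y ^ (-(1 + 2 * H)) =
      π / (2 * Real.sin (π * H)) := by
  obtain ⟨b1, b2⟩ := beta_sq hp hp1
  have e : ∀ y t : ℝ, (1 - Real.cos y) * Real.exp (-(t * y)) =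
    Real.exp (-(t * y)) - Real.cos y * Real.exp (-(t * y)) := fun y t => by ring
  have key := laplace_fub (φ := fun y => 1 - Real.cos y) (L := fun t => t⁻¹ * (1 + t ^ 2)⁻¹) (p := 1 + 2 * H)
    (by fun_prop) (fun y _ => by linarith [Real.cos_le_one y]) (by linarith)
    (fun t ht => by
      simp only [e]; exact (one_lap ht).1.sub (cos_lap ht).1)
    (fun t ht => by
      simp only [e]
      rw [integral_sub (one_lap ht).1 (cos_lap ht).1, (one_lap ht).2, (cos_lap ht).2]
      field_simp; ring)
  have e2 : ∀ t ∈ Set.Ioi (0:ℝ), t ^ (2 * H - 1) * (1 + t ^ 2)⁻¹ =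
      t ^ (1 + 2 * H - 1) * (t⁻¹ * (1 + t ^ 2)⁻¹) := by
    intro t ht
    have ht : 0 < t := ht
    rw [Real.rpow_sub_one ht.ne', show 1 + 2 * H - 1 = 2 * H by ring]; ring
  have b3 := b1.congr_fun e2 measurableSet_Ioi
  refine ⟨key.1.2 b3, ?_⟩
  rw [key.2 b3, ← b2, setIntegral_congr_fun measurableSet_Ioi e2]

lemma int_C {H : ℝ} (hp : 0 < H) (hp1 : H < 1) :
    IntegrableOn (fun y : ℝ => (Real.cos y - 1 + y ^ 2 / 2) * y ^ (-(3 + 2 * H))) (Set.Ioi 0) ∧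
    Real.Gamma (3 + 2 * H) * ∫ y in Set.Ioi (0:ℝ), (Real.cos y - 1 + y ^ 2 / 2) * y ^ (-(3 + 2 * H)) =
      π / (2 * Real.sin (π * H)) := by
  obtain ⟨b1, b2⟩ := beta_sq hp hp1
  have e : ∀ y t : ℝ, (Real.cos y - 1 + y ^ 2 / 2) * Real.exp (-(t * y)) =
    Real.cos y * Real.exp (-(t * y)) - Real.exp (-(t * y)) + 1 / 2 * (y ^ 2 * Real.exp (-(t * y))) := fun y t => by ring
  have key := laplace_fub (φ := fun y => Real.cos y - 1 + y ^ 2 / 2) (L := fun t => (t ^ 3)⁻¹ * (1 + t ^ 2)⁻¹) (p := 3 + 2 * H)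
    (by fun_prop) (fun y _ => by linarith [Real.one_sub_sq_div_two_le_cos (x := y)]) (by linarith)
    (fun t ht => by
      simp only [e]; exact ((cos_lap ht).1.sub (one_lap ht).1).add ((sq_lap ht).1.const_mul _))
    (fun t ht => by
      simp only [e]
      have hcs : IntegrableOn (fun y : ℝ => Real.cos y * Real.exp (-(t * y)) - Real.exp (-(t * y)))
        (Set.Ioi 0) := (cos_lap ht).1.sub (one_lap ht).1
      rw [integral_add hcs ((sq_lap ht).1.const_mul _),
        integral_sub (cos_lap ht).1 (one_lap ht).1, integral_const_mul,
        (one_lap ht).2, (cos_lap ht).2, (sq_lap ht).2]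
      field_simp; ring)
  have e2 : ∀ t ∈ Set.Ioi (0:ℝ), t ^ (2 * H - 1) * (1 + t ^ 2)⁻¹ =
      t ^ (3 + 2 * H - 1) * ((t ^ 3)⁻¹ * (1 + t ^ 2)⁻¹) := by
    intro t ht
    have ht : 0 < t := ht
    rw [show 3 + 2 * H - 1 = (2 * H - 1) + (3:ℕ) by push_cast; ring, Real.rpow_add_natCast ht.ne']
    field_simp
  have b3 := b1.congr_fun e2 measurableSet_Ioi
  refine ⟨key.1.2 b3, ?_⟩
  rw [key.2 b3, ← b2, setIntegral_congr_fun measurableSet_Ioi e2]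

lemma int_A {H α : ℝ} (hp : 0 < H) (hp1 : H < 1) (hα : 0 < α) :
    IntegrableOn (fun x : ℝ => x ^ (1 - 2 * H) / (α ^ 2 + x ^ 2)) (Set.Ioi 0) ∧
    ∫ x in Set.Ioi (0:ℝ), x ^ (1 - 2 * H) / (α ^ 2 + x ^ 2) =
      π / (2 * Real.sin (π * H)) / α ^ (2 * H) := by
  obtain ⟨b1, b2⟩ := beta_sq (H := 1 - H) (by linarith) (by linarith)
  rw [show 2 * (1 - H) - 1 = 1 - 2 * H by ring] at b1 b2
  rw [show π * (1 - H) = π - π * H by ring, Real.sin_pi_sub] at b2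
  have e : ∀ x ∈ Set.Ioi (0:ℝ), α ^ (-(1 + 2 * H)) * ((α⁻¹ * x) ^ (1 - 2 * H) * (1 + (α⁻¹ * x) ^ 2)⁻¹) * α ^ (0:ℝ)
      = x ^ (1 - 2 * H) / (α ^ 2 + x ^ 2) := by
    intro x hx
    have hx : 0 < x := hx
    rw [Real.mul_rpow (by positivity) hx.le, Real.inv_rpow hα.le, ← Real.rpow_neg hα.le,
      show -(1 + 2 * H) = -(1 - 2 * H)*(-1) - (2:ℕ) by push_cast; ring, Real.rpow_sub_natCast hα.ne',
      mul_neg_one, neg_neg, Real.rpow_neg hα.le, Real.rpow_zero]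
    have : 0 < α ^ (1 - 2 * H) := by positivity
    field_simp
  have hi : 0 < α⁻¹ := by positivity
  have c1 := (integrableOn_Ioi_comp_mul_left_iff _ 0 hi).2 (by rw [mul_zero]; exact b1)
  have c2 := IntegrableOn.congr_fun ((c1.const_mul (α ^ (-(1 + 2 * H)))).mul_const (α ^ (0:ℝ))) e
    measurableSet_Ioi
  refine ⟨c2, ?_⟩
  rw [← setIntegral_congr_fun measurableSet_Ioi e, integral_mul_const, integral_const_mul,
    integral_comp_mul_left_Ioi (fun y => y ^ (1 - 2 * H) * (1 + y ^ 2)⁻¹) 0 hi, mul_zero, b2,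
    Real.rpow_zero, smul_eq_mul, inv_inv, show -(1 + 2 * H) = -(2 * H) - 1 by ring,
    Real.rpow_sub_one hα.ne', Real.rpow_neg hα.le]
  field_simp

lemma bound_M {H c y : ℝ} (hc : 0 ≤ c) (hy : 0 < y) :
    ‖(Real.cos y - 1 + y ^ 2 / 2) * y ^ (-(1 + 2 * H)) / (c + y ^ 2)‖ ≤
      (Real.cos y - 1 + y ^ 2 / 2) * y ^ (-(3 + 2 * H)) := by
  have h0 : 0 ≤ Real.cos y - 1 + y ^ 2 / 2 := by
    linarith [Real.one_sub_sq_div_two_le_cos (x := y)]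
  rw [Real.norm_of_nonneg (by positivity), show -(3 + 2 * H) = -(1 + 2 * H) - (2:ℕ) by push_cast; ring,
    Real.rpow_sub_natCast hy.ne', ← mul_div_assoc]
  gcongr
  linarith

lemma meas_M {H c : ℝ} : Measurable fun y : ℝ =>
    (Real.cos y - 1 + y ^ 2 / 2) * y ^ (-(1 + 2 * H)) / (c + y ^ 2) := by
  fun_prop

lemma int_M {H c : ℝ} (hp : 0 < H) (hp1 : H < 1) (hc : 0 ≤ c) :
    IntegrableOn (fun y : ℝ => (Real.cos y - 1 + y ^ 2 / 2) * y ^ (-(1 + 2 * H)) / (c + y ^ 2))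
      (Set.Ioi 0) := by
  refine Integrable.mono' (int_C hp hp1).1 meas_M.aestronglyMeasurable ?_
  filter_upwards [ae_restrict_mem measurableSet_Ioi] with y hy using bound_M hc hy

lemma lim_M {H α : ℝ} (hp : 0 < H) (hp1 : H < 1) :
    Tendsto (fun s : ℝ => ∫ y in Set.Ioi (0:ℝ),
      (Real.cos y - 1 + y ^ 2 / 2) * y ^ (-(1 + 2 * H)) / (α ^ 2 * s ^ 2 + y ^ 2)) (𝓝[>] 0)
      (𝓝 (∫ y in Set.Ioi (0:ℝ), (Real.cos y - 1 + y ^ 2 / 2) * y ^ (-(3 + 2 * H)))) := by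
  refine tendsto_integral_filter_of_dominated_convergence _
    (Eventually.of_forall fun s => meas_M.aestronglyMeasurable)
    (Eventually.of_forall fun s => ?_) (int_C hp hp1).1 ?_
  · filter_upwards [ae_restrict_mem measurableSet_Ioi] with y hy using bound_M (by positivity) hy
  · filter_upwards [ae_restrict_mem measurableSet_Ioi] with y hy
    have hy : 0 < y := hy
    refine Tendsto.mono_left ?_ nhdsWithin_le_nhds
    have hc : ContinuousAt (fun s : ℝ => (Real.cos y - 1 + y ^ 2 / 2) * y ^ (-(1 + 2 * H)) /
        (α ^ 2 * s ^ 2 + y ^ 2)) 0 := by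
      apply ContinuousAt.div (by fun_prop) (by fun_prop)
      positivity
    have := hc.tendsto
    convert this using 2
    rw [show -(3 + 2 * H) = -(1 + 2 * H) - (2:ℕ) by push_cast; ring,
      Real.rpow_sub_natCast hy.ne', ← mul_div_assoc]
    simp

lemma J_eq {H α s : ℝ} (hp : 0 < H) (hp1 : H < 1) (hα : 0 < α) (hs : 0 < s) :
    ∫ x in Set.Ioi (0:ℝ), Real.cos (s * x) * (x ^ (1 - 2 * H) / (α ^ 2 + x ^ 2)) =
      (1 + α ^ 2 * s ^ 2 / 2) * (∫ x in Set.Ioi (0:ℝ), x ^ (1 - 2 * H) / (α ^ 2 + x ^ 2))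
      - s ^ (2 * H) * (∫ y in Set.Ioi (0:ℝ), (1 - Real.cos y) * y ^ (-(1 + 2 * H)))
      - α ^ 2 * s ^ (2 * H + 2) * (∫ y in Set.Ioi (0:ℝ),
      (Real.cos y - 1 + y ^ 2 / 2) * y ^ (-(1 + 2 * H)) / (α ^ 2 * s ^ 2 + y ^ 2)) := by
  have iA := (int_A hp hp1 hα).1
  have iB := (integrableOn_Ioi_comp_mul_left_iff _ 0 hs).2
    (by rw [mul_zero]; exact (int_B hp hp1).1)
  have iM := (integrableOn_Ioi_comp_mul_left_iff _ 0 hs).2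
    (by rw [mul_zero]; exact int_M hp hp1 (c := α ^ 2 * s ^ 2) (by positivity))
  have vB := integral_comp_mul_left_Ioi' (fun y => (1 - Real.cos y) * y ^ (-(1 + 2 * H))) 0 hs
  have vM := integral_comp_mul_left_Ioi' (fun y =>
    (Real.cos y - 1 + y ^ 2 / 2) * y ^ (-(1 + 2 * H)) / (α ^ 2 * s ^ 2 + y ^ 2)) 0 hs
  rw [mul_zero, smul_eq_mul] at vB vM
  rw [← vB, ← vM]
  have q1 : s ^ (2 * H) * s = s ^ (1 + 2 * H) := by
    rw [add_comm, Real.rpow_add_one hs.ne']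
  have q2 : s ^ (2 * H + 2) * s = s ^ (1 + 2 * H) * s ^ 2 := by
    rw [show 2 * H + 2 = 2 * H + (2:ℕ) by push_cast; ring, Real.rpow_add_natCast hs.ne', ← q1]; ring
  rw [← mul_assoc, q1, ← mul_assoc, mul_assoc (α ^ 2), q2, ← integral_const_mul, ← integral_const_mul,
    ← integral_const_mul]
  have jA := iA.const_mul (1 + α ^ 2 * s ^ 2 / 2)
  have jB := iB.const_mul (s ^ (1 + 2 * H))
  have jM := iM.const_mul (α ^ 2 * (s ^ (1 + 2 * H) * s ^ 2))
  have jAB := jA.sub jB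
  simp only [Pi.sub_def] at jAB
  rw [← integral_sub jA jB, ← integral_sub jAB jM]
  refine setIntegral_congr_fun measurableSet_Ioi (fun x hx => ?_)
  have hx : 0 < x := hx
  rw [Real.mul_rpow hs.le hx.le, Real.rpow_neg hs.le,
    show 1 - 2 * H = -(1 + 2 * H) + (2:ℕ) by push_cast; ring, Real.rpow_add_natCast hx.ne']
  have : 0 < s ^ (1 + 2 * H) := by positivity
  have : α ^ 2 * s ^ 2 + (s * x) ^ 2 = s ^ 2 * (α ^ 2 + x ^ 2) := by ring
  rw [this]
  field_simp
  ring

/-- Short-lag expansion of the autocovariance of the stationary univariate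
fractional Ornstein–Uhlenbeck process (Lemma B.4 of the paper). -/
theorem stmt16
    (α ν H : ℝ) (hα : 0 < α) (hν : 0 < ν)
    (hH : H ∈ Set.Ioo (0:ℝ) 1) (hH2 : H ≠ 1 / 2)
    (r : ℝ → ℝ)
    (hr : ∀ s, r s = ν ^ 2 * (Real.Gamma (2 * H + 1) * Real.sin (π * H)) / (2 * π) *
      ∫ x : ℝ, Real.cos (s * x) * (|x| ^ (1 - 2 * H) / (α ^ 2 + x ^ 2)))
    (V : ℝ) (hV : V = ν ^ 2 * Real.Gamma (2 * H + 1) / (2 * α ^ (2 * H))) :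
    (fun s : ℝ => r s -
        (V - ν ^ 2 / 2 * s ^ (2 * H) + α ^ 2 / 2 * V * s ^ (2 : ℕ) -
          α ^ 2 * ν ^ 2 / (4 * (H + 1) * (1 + 2 * H)) * s ^ (2 * H + 2)))
      =o[𝓝[>] (0:ℝ)] fun s : ℝ => s ^ (2 * H + 2) := by
  obtain ⟨h0, h1⟩ := hH
  have hS : 0 < Real.sin (π * H) := Real.sin_pos_of_pos_of_lt_pi (by positivity)
    (by nlinarith [Real.pi_pos])
  have hG : 0 < Real.Gamma (2 * H + 1) := Real.Gamma_pos_of_pos (by linarith)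
  have vA := (int_A h0 h1 hα).2
  have vB := (int_B h0 h1).2
  have vC := (int_C h0 h1).2
  have hM := lim_M (α := α) h0 h1
  have hJ := fun s (hs : 0 < s) => J_eq h0 h1 hα hs
  set A := ∫ x in Set.Ioi (0:ℝ), x ^ (1 - 2 * H) / (α ^ 2 + x ^ 2)
  set B := ∫ y in Set.Ioi (0:ℝ), (1 - Real.cos y) * y ^ (-(1 + 2 * H))
  set C := ∫ y in Set.Ioi (0:ℝ), (Real.cos y - 1 + y ^ 2 / 2) * y ^ (-(3 + 2 * H))
  set M : ℝ → ℝ := fun s => ∫ y in Set.Ioi (0:ℝ),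
      (Real.cos y - 1 + y ^ 2 / 2) * y ^ (-(1 + 2 * H)) / (α ^ 2 * s ^ 2 + y ^ 2)
  have hr' : ∀ s, r s = ν ^ 2 * (Real.Gamma (2 * H + 1) * Real.sin (π * H)) / (2 * π) *
      (2 * ∫ x in Set.Ioi (0:ℝ), Real.cos (s * x) * (x ^ (1 - 2 * H) / (α ^ 2 + x ^ 2))) := by
    intro s
    rw [hr s, ← integral_comp_abs (f := fun x => Real.cos (s * x) * (x ^ (1 - 2 * H) / (α ^ 2 + x ^ 2)))]
    congr 2
    ext x
    rw [sq_abs]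
    rcases abs_cases x with ⟨h, _⟩ | ⟨h, _⟩ <;> rw [h]
    rw [mul_neg, Real.cos_neg]
  rw [add_comm 1 (2 * H)] at vB
  have g3 : Real.Gamma (3 + 2 * H) = (2 * H + 2) * ((2 * H + 1) * Real.Gamma (2 * H + 1)) := by
    rw [show 3 + 2 * H = (2 * H + 1 + 1) + 1 by ring, Real.Gamma_add_one (by linarith),
      Real.Gamma_add_one (by linarith)]
    ring
  rw [g3] at vC
  have hB : B = π / (2 * Real.sin (π * H)) / Real.Gamma (2 * H + 1) := by
    rw [← vB]; field_simp
  have hC : C = π / (2 * Real.sin (π * H)) / ((2 * H + 2) * ((2 * H + 1) * Real.Gamma (2 * H + 1))) := by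
    rw [← vC]; field_simp
  set K := ν ^ 2 * (Real.Gamma (2 * H + 1) * Real.sin (π * H)) / π * α ^ 2 with hK
  have main : ∀ᶠ s in 𝓝[>] (0:ℝ), -K * (M s - C) * s ^ (2 * H + 2) = r s -
        (V - ν ^ 2 / 2 * s ^ (2 * H) + α ^ 2 / 2 * V * s ^ (2 : ℕ) -
          α ^ 2 * ν ^ 2 / (4 * (H + 1) * (1 + 2 * H)) * s ^ (2 * H + 2)) := by
    filter_upwards [self_mem_nhdsWithin] with s hs
    have hs : 0 < s := hs
    have hpi := Real.pi_pos
    have hJs : _ = (1 + α ^ 2 * s ^ 2 / 2) * A - s ^ (2 * H) * B -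
      α ^ 2 * s ^ (2 * H + 2) * M s := hJ s hs
    rw [hr' s, hJs, hV, vA, hB, hC, hK]
    have ha : 0 < α ^ (2 * H) := by positivity
    generalize Real.sin (π * H) = S at hS
    generalize Real.Gamma (2 * H + 1) = G at hG
    generalize α ^ (2 * H) = a at ha
    generalize s ^ (2 * H + 2) = s2
    generalize s ^ (2 * H) = s1
    generalize M s = m
    clear * - hS hG ha h0 hpi hα hν hs
    field_simp
    ring
  refine IsLittleO.congr' (f₁ := fun s => -K * (M s - C) * s ^ (2 * H + 2))
    (g₁ := fun s => s ^ (2 * H + 2)) ?_ main EventuallyEq.rfl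
  have hz : Tendsto (fun s => -K * (M s - C)) (𝓝[>] 0) (𝓝 0) := by
    simpa using (hM.sub_const C).const_mul (-K)
  simpa using ((isLittleO_one_iff ℝ).2 hz).mul_isBigO (isBigO_refl (fun s : ℝ => s ^ (2 * H + 2)) (𝓝[>] 0))
end

section
/- Let $\alpha_1,\alpha_2,\nu_1,\nu_2>0$, $H\in(1,2)$, and $\rho,\eta\in\mathbb{R}$. Then $\nu_1\nu_2\,H(H-1)\Big[\frac{\rho-\eta}{2}\int_{-\infty}^{0}\!\int_{-\infty}^{v}e^{\alpha_1 u+\alpha_2 v}\,(v-u)^{H-2}\,du\,dv+\frac{\rho+\eta}{2}\int_{-\infty}^{0}\!\int_{v}^{0}e^{\alpha_1 u+\alpha_2 v}\,(u-v)^{H-2}\,du\,dv\Big]=\frac{\Gamma(H+1)\,\nu_1\nu_2}{2(\alpha_1+\alpha_2)}\Big((\alpha_1^{1-H}+\alpha_2^{1-H})\rho+(\alpha_2^{1-H}-\alpha_1^{1-H})\eta\Big)$, both double integrals being finite. -/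
open MeasureTheory Filter Asymptotics Topology Real

noncomputable def kerG (a s : ℝ) : ℝ → ℝ :=
  (Set.Ioi (0:ℝ)).indicator (fun t => t ^ s * Real.exp (-(a * t)))

lemma kerG_integral (a H : ℝ) (ha : 0 < a) (hH : 1 < H) :
    ∫ t, kerG a (H - 2) t = a ^ (1 - H) * Real.Gamma (H - 1) := by
  unfold kerG
  rw [integral_indicator measurableSet_Ioi]
  have h := Real.integral_rpow_mul_exp_neg_mul_Ioi (a := H - 1) (r := a) (by linarith) ha
  rw [show H - 1 - 1 = H - 2 by ring] at h
  rw [h, one_div, Real.inv_rpow ha.le, ← Real.rpow_neg ha.le, neg_sub]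

lemma kerG_integrable (a H : ℝ) (ha : 0 < a) (hH : 1 < H) :
    Integrable (kerG a (H - 2)) := by
  apply Integrable.of_integral_ne_zero
  rw [kerG_integral a H ha hH]
  have := Real.Gamma_pos_of_pos (s := H - 1) (by linarith)
  positivity

lemma kerK_integrable (c : ℝ) (hc : 0 < c) :
    Integrable ((Set.Iio (0:ℝ)).indicator (fun v => Real.exp (c * v))) := by
  rw [integrable_indicator_iff measurableSet_Iio]
  exact (integrableOn_exp_mul_Iic hc 0).mono_set Set.Iio_subset_Iic_self

lemma meas_S : MeasurableSet {q : ℝ × ℝ | q.2 < 0 ∧ q.1 < q.2} :=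
  (measurableSet_lt measurable_snd measurable_const).inter
    (measurableSet_lt measurable_fst measurable_snd)

lemma f1_int (a b H : ℝ) (ha : 0 < a) (hb : 0 < b) (hH : 1 < H) :
    IntegrableOn
      (fun q : ℝ × ℝ => Real.exp (a * q.1 + b * q.2) * (q.2 - q.1) ^ (H - 2))
      {q : ℝ × ℝ | q.2 < 0 ∧ q.1 < q.2} := by
  rw [← integrable_indicator_iff meas_S]
  have h1 := ((kerG_integrable a H ha hH).comp_neg).mul_prod (kerK_integrable (a + b) (by linarith))
  have h2 := (measurePreserving_sub_prod (volume : Measure ℝ) (volume : Measure ℝ)).integrable_comp_of_integrable h1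
  refine h2.congr (ae_of_all _ ?_)
  rintro ⟨u, v⟩
  simp only [kerG, Set.indicator, Function.comp, Set.mem_Ioi, Set.mem_Iio, Set.mem_ofPred_eq, neg_sub, sub_pos]
  by_cases h : u < v <;> by_cases h' : v < 0 <;> simp [h, h']
  rw [mul_assoc, ← Real.exp_add, mul_comm]
  ring_nf

lemma f1_eval (a b H : ℝ) (ha : 0 < a) (hb : 0 < b) (hH : 1 < H) :
    ∫ v in Set.Iio (0:ℝ), ∫ u in Set.Iio v,
      Real.exp (a * u + b * v) * (v - u) ^ (H - 2) =
    a ^ (1 - H) * Real.Gamma (H - 1) / (a + b) := by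
  have h : ∀ v : ℝ, ∫ u in Set.Iio v, Real.exp (a * u + b * v) * (v - u) ^ (H - 2)
      = Real.exp ((a + b) * v) * (a ^ (1 - H) * Real.Gamma (H - 1)) := by
    intro v
    rw [← kerG_integral a H ha hH, ← integral_sub_left_eq_self (kerG a (H - 2)) volume v, ← integral_const_mul,
      ← integral_indicator measurableSet_Iio]
    congr 1
    ext u
    simp only [kerG, Set.indicator, Set.mem_Ioi, Set.mem_Iio, sub_pos]
    by_cases h : u < v <;> simp [h]
    rw [mul_left_comm, ← Real.exp_add, mul_comm]
    ring_nf
  simp_rw [h]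
  rw [integral_mul_const, ← integral_Iic_eq_integral_Iio, integral_exp_mul_Iic (by linarith)]
  simp
  ring

lemma f2_int (a b H : ℝ) (ha : 0 < a) (hb : 0 < b) (hH : 1 < H) :
    IntegrableOn
      (fun q : ℝ × ℝ => Real.exp (a * q.1 + b * q.2) * (q.1 - q.2) ^ (H - 2))
      {q : ℝ × ℝ | q.2 < 0 ∧ q.2 < q.1 ∧ q.1 < 0} := by
  have hS : MeasurableSet {q : ℝ × ℝ | q.2 < 0 ∧ q.2 < q.1 ∧ q.1 < 0} :=
    (measurableSet_lt measurable_snd measurable_const).inter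
    ((measurableSet_lt measurable_snd measurable_fst).inter
      (measurableSet_lt measurable_fst measurable_const))
  rw [← integrable_indicator_iff hS]
  have h1 := ((integrable_indicator_iff meas_S).2 (f1_int b a H hb ha hH)).swap
  refine h1.congr (ae_of_all _ ?_)
  rintro ⟨u, v⟩
  simp only [Set.indicator, Function.comp, Set.mem_ofPred_eq, Prod.swap]
  have : (u < 0 ∧ v < u) ↔ (v < 0 ∧ v < u ∧ u < 0) :=
    ⟨fun h => ⟨h.2.trans h.1, h.2, h.1⟩, fun h => ⟨h.2.2, h.2.1⟩⟩
  simp only [this, add_comm]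

lemma f2_eval (a b H : ℝ) (ha : 0 < a) (hb : 0 < b) (hH : 1 < H) :
    ∫ v in Set.Iio (0:ℝ), ∫ u in Set.Ioo v (0:ℝ),
      Real.exp (a * u + b * v) * (u - v) ^ (H - 2) =
    b ^ (1 - H) * Real.Gamma (H - 1) / (a + b) := by
  rw [add_comm a b, ← f1_eval b a H hb ha hH]
  have h1 := ((integrable_indicator_iff meas_S).2 (f1_int b a H hb ha hH))
  have h2 := integral_integral_swap (μ := (volume : Measure ℝ)) (ν := (volume : Measure ℝ))
    (f := fun v u => {q : ℝ × ℝ | q.2 < 0 ∧ q.1 < q.2}.indicator (fun q : ℝ × ℝ =>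
      Real.exp (b * q.1 + a * q.2) * (q.2 - q.1) ^ (H - 2)) (v, u)) h1
  convert h2 using 1
  · rw [← integral_indicator measurableSet_Iio]
    congr 1
    ext v
    by_cases hv : v < 0
    · rw [Set.indicator_of_mem (by exact hv), ← integral_indicator measurableSet_Ioo]
      congr 1
      ext u
      simp only [Set.indicator, Set.mem_Ioo, Set.mem_ofPred_eq, and_comm, add_comm]
    · rw [Set.indicator_of_notMem (by exact hv)]
      symm
      apply integral_eq_zero_of_ae
      refine ae_of_all _ fun u => ?_
      apply Set.indicator_of_notMem
      rintro ⟨h3, h4⟩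
      exact hv (lt_trans h4 h3)
  · rw [← integral_indicator measurableSet_Iio]
    congr 1
    ext u
    by_cases hu : u < 0
    · rw [Set.indicator_of_mem (by exact hu), ← integral_indicator measurableSet_Iio]
      congr 1
      ext v
      simp [Set.indicator, hu]
    · simp [Set.indicator, hu]

/-- Equation (2.3) of Theorem 2.2: evaluation of the lag-zero cross-covariance
of the stationary bivariate fractional Ornstein–Uhlenbeck process for
`H = H₁ + H₂ ∈ (1,2)`, the two double integrals being finite. -/
theorem stmt17
    (α1 α2 ν1 ν2 H ρ η : ℝ)
    (hα1 : 0 < α1) (hα2 : 0 < α2) (hν1 : 0 < ν1) (hν2 : 0 < ν2)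
    (hH : H ∈ Set.Ioo (1:ℝ) 2) :
    IntegrableOn
      (fun q : ℝ × ℝ => Real.exp (α1 * q.1 + α2 * q.2) * (q.2 - q.1) ^ (H - 2))
      {q : ℝ × ℝ | q.2 < 0 ∧ q.1 < q.2} ∧
    IntegrableOn
      (fun q : ℝ × ℝ => Real.exp (α1 * q.1 + α2 * q.2) * (q.1 - q.2) ^ (H - 2))
      {q : ℝ × ℝ | q.2 < 0 ∧ q.2 < q.1 ∧ q.1 < 0} ∧
    ν1 * ν2 * (H * (H - 1)) *
        ((ρ - η) / 2 *
            ∫ v in Set.Iio (0:ℝ), ∫ u in Set.Iio v,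
              Real.exp (α1 * u + α2 * v) * (v - u) ^ (H - 2)) +
      ν1 * ν2 * (H * (H - 1)) *
        ((ρ + η) / 2 *
            ∫ v in Set.Iio (0:ℝ), ∫ u in Set.Ioo v (0:ℝ),
              Real.exp (α1 * u + α2 * v) * (u - v) ^ (H - 2)) =
      Real.Gamma (H + 1) * ν1 * ν2 / (2 * (α1 + α2)) *
        ((α1 ^ (1 - H) + α2 ^ (1 - H)) * ρ + (α2 ^ (1 - H) - α1 ^ (1 - H)) * η) := by
  obtain ⟨h1, h2⟩ := hH
  refine ⟨f1_int α1 α2 H hα1 hα2 h1, f2_int α1 α2 H hα1 hα2 h1, ?_⟩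
  rw [f1_eval α1 α2 H hα1 hα2 h1, f2_eval α1 α2 H hα1 hα2 h1]
  have hG : Real.Gamma (H + 1) = H * ((H - 1) * Real.Gamma (H - 1)) := by
    rw [Real.Gamma_add_one (by linarith), ← Real.Gamma_add_one (by linarith : H - 1 ≠ 0)]
    simp
  rw [hG]
  have : α1 + α2 ≠ 0 := by positivity
  field_simp
  ring
end

section
/- Let $\alpha_1,\alpha_2,\nu_1,\nu_2>0$, let $H_1,H_2\in(1/2,1)$ with $H:=H_1+H_2=3/2$, and let $\rho,\eta\in\mathbb{R}$. Define $r_{11}(s)=\nu_1^{2}\frac{\Gamma(2H_1+1)\sin(\pi H_1)}{2\pi}\int_{-\infty}^{\infty}\cos(sx)\frac{|x|^{1-2H_1}}{\alpha_1^{2}+x^{2}}dx$ and $r_{22}(s)=\nu_2^{2}\frac{\Gamma(2H_2+1)\sin(\pi H_2)}{2\pi}\int_{-\infty}^{\infty}\cos(sx)\frac{|x|^{1-2H_2}}{\alpha_2^{2}+x^{2}}dx$. Then $\lim_{s\to+\infty}s\,\big(r_{11}(s)\,r_{22}(s)+r_{12}(s)\,r_{21}(s)\big)=\frac{\nu_1^{2}\nu_2^{2}}{4\,\alpha_1^{2}\alpha_2^{2}}\Big(\frac{9}{16}\,(\rho^{2}-\eta^{2})+4\,H_1H_2(2H_1-1)(2H_2-1)\Big)$.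 -/
open MeasureTheory Filter Asymptotics Topology Real

lemma aux_int {f : ℝ → ℝ} (hf : Measurable f) {C D p q : ℝ} (hp : -1 < p) (hq : q < -1)
    (h0 : ∀ x, 0 < x → x ≤ 1 → |f x| ≤ C * x ^ p) (h1 : ∀ x, 1 < x → |f x| ≤ D * x ^ q) :
    IntegrableOn f (Set.Ioi 0) := by
  rw [← Set.Ioc_union_Ioi_eq_Ioi (zero_le_one' ℝ)]
  refine IntegrableOn.union ?_ ?_
  · have : IntegrableOn (fun x : ℝ => C * x ^ p) (Set.Ioc 0 1) := by
      refine Integrable.const_mul ?_ C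
      have := (intervalIntegral.intervalIntegrable_rpow' hp (a := 0) (b := 1))
      exact (intervalIntegrable_iff_integrableOn_Ioc_of_le zero_le_one).1 this
    refine Integrable.mono' this hf.aestronglyMeasurable ?_
    exact (ae_restrict_iff' measurableSet_Ioc).2 (ae_of_all _ fun x hx => h0 x hx.1 hx.2)
  · have : IntegrableOn (fun x : ℝ => D * x ^ q) (Set.Ioi 1) :=
      Integrable.const_mul (integrableOn_Ioi_rpow_of_lt hq one_pos) D
    refine Integrable.mono' this hf.aestronglyMeasurable ?_
    exact (ae_restrict_iff' measurableSet_Ioi).2 (ae_of_all _ fun x hx => h1 x hx)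

lemma aux_int_sin {a : ℝ} (ha : 0 < a) (ha1 : a < 1) :
    IntegrableOn (fun y : ℝ => Real.sin y * y ^ (-a - 1)) (Set.Ioi 0) := by
  refine aux_int (C := 1) (D := 1) (p := -a) (q := -a-1) (by fun_prop) (by linarith) (by linarith) ?_ ?_
  · intro x hx hx1
    rw [abs_mul, abs_of_pos (rpow_pos_of_pos hx _), one_mul]
    have : x ^ (-a) = x * x ^ (-a-1) := by
      rw [← rpow_one_add' hx.le (by linarith)]; congr 1; ring
    rw [this]
    gcongr
    rw [← abs_of_pos hx]
    simpa [abs_of_pos hx] using Real.abs_sin_le_abs (x := x)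
  · intro x hx
    have hx0 : 0 < x := by linarith
    rw [abs_mul, abs_of_pos (rpow_pos_of_pos hx0 _)]
    gcongr
    exact abs_sin_le_one x

lemma aux_beta_int {a : ℝ} (ha : 0 < a) (ha1 : a < 1) :
    IntegrableOn (fun t : ℝ => t ^ a * (1 + t ^ 2)⁻¹) (Set.Ioi 0) := by
  refine aux_int (C := 1) (D := 1) (p := a) (q := a - 2) (by fun_prop) (by linarith) (by linarith) ?_ ?_
  · intro x hx hx1
    rw [abs_of_nonneg (by positivity), one_mul]
    apply mul_le_of_le_one_right (by positivity)
    apply inv_le_one_of_one_le₀; nlinarith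
  · intro x hx
    have hx0 : 0 < x := by linarith
    rw [abs_of_nonneg (by positivity), one_mul, rpow_sub hx0, div_eq_mul_inv]
    gcongr
    rw [rpow_two]; linarith

lemma aux_beta {a : ℝ} (ha : 0 < a) (ha1 : a < 1) :
    ∫ t in Set.Ioi (0:ℝ), t ^ a * (1 + t ^ 2)⁻¹ = π / 2 / Real.sin (π * ((a + 1) / 2)) := by
  have hr : ∀ t : ℝ, ∫ r in Set.Ioi (0:ℝ), t ^ a * rexp (-(1 + t ^ 2) * r) = t ^ a * (1 + t ^ 2)⁻¹ := by
    intro t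
    rw [integral_const_mul, integral_exp_mul_Ioi (by nlinarith)]
    congr 1
    simp only [mul_zero, Real.exp_zero]
    rw [neg_div_neg_eq, one_div]
  have hint : Integrable (Function.uncurry fun t r : ℝ => t ^ a * rexp (-(1 + t ^ 2) * r))
      ((volume.restrict (Set.Ioi 0)).prod (volume.restrict (Set.Ioi 0))) := by
    rw [integrable_prod_iff (by apply Measurable.aestronglyMeasurable; unfold Function.uncurry; fun_prop)]
    constructor
    · refine ae_of_all _ fun t => ?_
      have : IntegrableOn (fun r : ℝ => rexp (-(1 + t ^ 2) * r)) (Set.Ioi 0) :=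
        integrableOn_exp_mul_Ioi (by nlinarith) 0
      exact Integrable.const_mul this (t ^ a)
    · refine (integrable_congr ?_).2 (aux_beta_int ha ha1)
      refine (ae_restrict_iff' measurableSet_Ioi).2 (ae_of_all _ fun t ht => ?_)
      have ht : 0 < t := ht
      simp only [Function.uncurry]
      rw [← hr t]
      congr 1; ext r
      rw [Real.norm_eq_abs, abs_of_nonneg (by positivity)]
  have h := integral_integral_swap hint
  simp only [hr] at h
  rw [h]
  have h2 : ∀ r ∈ Set.Ioi (0:ℝ), ∫ t in Set.Ioi (0:ℝ), t ^ a * rexp (-(1 + t ^ 2) * r)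
      = (1/2 * Real.Gamma ((a+1)/2)) * (r ^ ((1 - a)/2 - 1) * rexp (- (1 * r))) := by
    intro r hr
    have := integral_rpow_mul_exp_neg_mul_rpow (p := 2) (q := a) (b := r) two_pos (by linarith) hr
    have e : ∀ t : ℝ, t ^ a * rexp (-(1 + t ^ 2) * r) = rexp (-r) * (t ^ a * rexp (-r * t ^ (2:ℝ))) := by
      intro t
      rw [show -(1 + t ^ 2) * r = -r + -r * t ^ (2:ℝ) by rw [rpow_two]; ring, Real.exp_add]; ring
    simp only [e]
    rw [integral_const_mul, this, show -(a+1)/2 = (1-a)/2 - 1 by ring, one_mul]; ring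
  rw [setIntegral_congr_fun measurableSet_Ioi h2, integral_const_mul,
    integral_rpow_mul_exp_neg_mul_Ioi (by linarith) one_pos]
  have := Real.Gamma_mul_Gamma_one_sub ((a+1)/2)
  rw [show 1 - (a+1)/2 = (1-a)/2 by ring] at this
  rw [div_self one_ne_zero, one_rpow, one_mul, mul_assoc, this]; ring

lemma aux_lap {t : ℝ} (ht : 0 < t) :
    ∫ y in Set.Ioi (0:ℝ), Real.sin y * rexp (-(y * t)) = (1 + t ^ 2)⁻¹ := by
  have hb : IntegrableOn (fun y : ℝ => rexp (-t * y)) (Set.Ioi 0) :=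
    integrableOn_exp_mul_Ioi (by linarith) 0
  have := integral_Ioi_of_hasDerivAt_of_tendsto' (a := 0) (m := 0)
    (f := fun y : ℝ => - (1 + t ^ 2)⁻¹ * (rexp (-(y * t)) * (Real.cos y + t * Real.sin y)))
    (f' := fun y : ℝ => Real.sin y * rexp (-(y * t))) ?_ ?_ ?_
  · rw [this]; simp
  · intro y _
    have h1 : HasDerivAt (fun y : ℝ => rexp (-(y * t))) (rexp (-(y*t)) * (-(1 * t))) y :=
      (((hasDerivAt_id y).mul_const t).neg).exp
    have h2 := (h1.mul ((hasDerivAt_cos y).add ((hasDerivAt_sin y).const_mul t))).const_mul (-(1+t^2)⁻¹)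
    refine h2.congr_deriv ?_
    have : (1 + t^2) ≠ 0 := by positivity
    simp only [Pi.add_apply]
    field_simp
    ring
  · refine Integrable.mono' hb (by apply Measurable.aestronglyMeasurable; fun_prop) (ae_of_all _ fun y => ?_)
    rw [norm_mul, Real.norm_eq_abs, Real.norm_eq_abs, abs_of_pos (Real.exp_pos _),
      show -t * y = -(y*t) by ring]
    exact mul_le_of_le_one_left (Real.exp_pos _).le (abs_sin_le_one y)
  · rw [← mul_zero (-(1 + t ^ 2)⁻¹)]
    refine Tendsto.const_mul _ ?_
    have h0 : Tendsto (fun y : ℝ => rexp (-(y * t))) atTop (𝓝 0) := by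
      refine Real.tendsto_exp_neg_atTop_nhds_zero.comp (tendsto_id.atTop_mul_const ht)
    refine h0.zero_mul_isBoundedUnder_le ?_
    refine isBoundedUnder_of ⟨1 + t, fun y => ?_⟩
    simp only [Function.comp, Real.norm_eq_abs]
    refine (abs_add_le _ _).trans ?_
    rw [abs_mul, abs_of_pos ht]
    have := abs_cos_le_one y
    have := abs_sin_le_one y
    nlinarith

lemma aux_sin {a : ℝ} (ha : 0 < a) (ha1 : a < 1) :
    ∫ y in Set.Ioi (0:ℝ), Real.sin y * y ^ (-a - 1) =
      π / 2 / Real.sin (π * ((a + 1) / 2)) / Real.Gamma (a + 1) := by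
  have hG : 0 < Real.Gamma (a + 1) := Real.Gamma_pos_of_pos (by linarith)
  have hr : ∀ y ∈ Set.Ioi (0:ℝ), ∫ t in Set.Ioi (0:ℝ), t ^ a * rexp (-(y * t)) =
      Real.Gamma (a+1) * y ^ (-a-1) := by
    intro y hy
    have hy' : 0 < y := hy
    have := integral_rpow_mul_exp_neg_mul_Ioi (a := a + 1) (r := y) (by linarith) hy
    rw [add_sub_cancel_right] at this
    rw [this, one_div, inv_rpow hy'.le, ← rpow_neg hy'.le, mul_comm]; congr 2; ring
  have hint : Integrable (Function.uncurry fun y t : ℝ => Real.sin y * (t ^ a * rexp (-(y * t))))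
      ((volume.restrict (Set.Ioi 0)).prod (volume.restrict (Set.Ioi 0))) := by
    rw [integrable_prod_iff (by apply Measurable.aestronglyMeasurable; unfold Function.uncurry; fun_prop)]
    constructor
    · refine (ae_restrict_iff' measurableSet_Ioi).2 (ae_of_all _ fun y hy => ?_)
      have hy' : 0 < y := hy
      have := integrableOn_rpow_mul_exp_neg_mul_rpow (p := 1) (s := a) (b := y) (by linarith) one_pos hy'
      have h3 : IntegrableOn (fun t : ℝ => t ^ a * rexp (-(y * t))) (Set.Ioi 0) := by
        simpa [IntegrableOn] using this
      exact Integrable.const_mul h3 (Real.sin y)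
    · refine (integrable_congr ?_).2 (((aux_int_sin ha ha1).norm).const_mul (Real.Gamma (a+1)))
      refine (ae_restrict_iff' measurableSet_Ioi).2 (ae_of_all _ fun y hy => ?_)
      have hy' : 0 < y := hy
      simp only [Function.uncurry, norm_mul]
      rw [integral_const_mul]
      rw [Real.norm_eq_abs (y ^ _), abs_of_nonneg (by positivity), mul_left_comm, ← hr y hy]
      congr 1
      refine setIntegral_congr_fun measurableSet_Ioi fun t ht => ?_
      have ht' : 0 < t := ht
      simp only [Real.norm_eq_abs]
      rw [abs_of_nonneg (by positivity), abs_of_nonneg (by positivity)]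
  have h := integral_integral_swap hint
  have e1 : ∫ y in Set.Ioi (0:ℝ), ∫ t in Set.Ioi (0:ℝ), Real.sin y * (t ^ a * rexp (-(y * t)))
      = Real.Gamma (a+1) * ∫ y in Set.Ioi (0:ℝ), Real.sin y * y ^ (-a - 1) := by
    rw [← integral_const_mul]
    refine setIntegral_congr_fun measurableSet_Ioi fun y hy => ?_
    rw [integral_const_mul, hr y hy]; ring
  have e2 : ∫ t in Set.Ioi (0:ℝ), ∫ y in Set.Ioi (0:ℝ), Real.sin y * (t ^ a * rexp (-(y * t)))
      = π / 2 / Real.sin (π * ((a + 1) / 2)) := by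
    rw [← aux_beta ha ha1]
    refine setIntegral_congr_fun measurableSet_Ioi fun t ht => ?_
    rw [← aux_lap ht, ← integral_const_mul]
    congr 1; ext y; ring
  rw [e1, e2] at h
  rw [← h]; field_simp

lemma auxB_chi {a α : ℝ} (ha : 0 < a) (ha1 : a < 1) (hα : 0 < α) :
    IntegrableOn (fun x : ℝ => x ^ (1 - a) / (α ^ 2 + x ^ 2) ^ 2) (Set.Ioi 0) := by
  refine aux_int (C := 1 / (α ^ 2) ^ 2) (D := 1) (p := 1 - a) (q := 1 - a - 4) (by fun_prop) (by linarith) (by linarith) ?_ ?_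
  · intro x hx hx1
    rw [abs_of_nonneg (by positivity), one_div_mul_eq_div]
    gcongr
    nlinarith [sq_nonneg x]
  · intro x hx
    have hx0 : 0 < x := by linarith
    rw [abs_of_nonneg (by positivity), one_mul, rpow_sub hx0 (1 - a) 4]
    have : x ^ (4:ℝ) = (x ^ 2) ^ 2 := by
      rw [← pow_mul]; exact_mod_cast rpow_natCast x 4
    rw [this]
    gcongr
    nlinarith [sq_nonneg α]

lemma auxB_J1 {a α : ℝ} (ha : 0 < a) (ha1 : a < 1) (hα : 0 < α) :
    Tendsto (fun s : ℝ => s ^ (-a) * ∫ x in Set.Ioi (0:ℝ),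
        Real.sin (s * x) * (x ^ (-a - 1) / (α ^ 2 + x ^ 2))) atTop
      (𝓝 ((∫ y in Set.Ioi (0:ℝ), Real.sin y * y ^ (-a - 1)) / α ^ 2)) := by
  have key : Tendsto (fun s : ℝ => ∫ y in Set.Ioi (0:ℝ),
      Real.sin y * y ^ (-a - 1) / (α ^ 2 + (y * s⁻¹) ^ 2)) atTop
      (𝓝 (∫ y in Set.Ioi (0:ℝ), Real.sin y * y ^ (-a - 1) / α ^ 2)) := by
    refine tendsto_integral_filter_of_dominated_convergence
      (fun y => ‖Real.sin y * y ^ (-a - 1)‖ / α ^ 2) ?_ ?_ ?_ ?_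
    · refine Eventually.of_forall fun s => ?_
      apply Measurable.aestronglyMeasurable; fun_prop
    · refine Eventually.of_forall fun s => ae_of_all _ fun y => ?_
      rw [norm_div]
      gcongr
      rw [Real.norm_eq_abs, abs_of_nonneg (by positivity)]
      nlinarith [sq_nonneg (y * s⁻¹)]
    · exact (aux_int_sin ha ha1).norm.div_const _
    · refine ae_of_all _ fun y => ?_
      have : Tendsto (fun s : ℝ => Real.sin y * y ^ (-a - 1) / (α ^ 2 + (y * s⁻¹) ^ 2)) atTop
        (𝓝 (Real.sin y * y ^ (-a - 1) / (α ^ 2 + (y * 0) ^ 2))) := by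
        refine Tendsto.div tendsto_const_nhds ?_ (by positivity)
        exact ((tendsto_inv_atTop_zero.const_mul y).pow 2).const_add _
      simpa using this
  rw [integral_div] at key
  refine key.congr' ?_
  filter_upwards [eventually_gt_atTop 0] with s hs
  have h := integral_comp_mul_left_Ioi (fun y : ℝ => Real.sin y * y ^ (-a - 1) / (α ^ 2 + (y * s⁻¹) ^ 2)) 0 hs
  rw [mul_zero, smul_eq_mul] at h
  have h' : ∫ y in Set.Ioi (0:ℝ), Real.sin y * y ^ (-a - 1) / (α ^ 2 + (y * s⁻¹) ^ 2) =
    s * ∫ x in Set.Ioi (0:ℝ), Real.sin (s * x) * (s * x) ^ (-a - 1) / (α ^ 2 + (s * x * s⁻¹) ^ 2) := by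
    rw [h, mul_inv_cancel_left₀ hs.ne']
  rw [h', ← integral_const_mul, ← integral_const_mul]
  refine setIntegral_congr_fun measurableSet_Ioi fun x hx => ?_
  have hx' : 0 < x := hx
  rw [show s * x * s⁻¹ = x by field_simp, mul_rpow hs.le hx'.le, rpow_sub hs, rpow_one]
  field_simp

lemma auxB_parts {a α s : ℝ} (ha : 0 < a) (ha1 : a < 1) (hα : 0 < α) (hs : 0 < s) :
    s * ∫ x in Set.Ioi (0:ℝ), Real.cos (s * x) * (x ^ (-a) / (α ^ 2 + x ^ 2)) =
    a * (∫ x in Set.Ioi (0:ℝ), Real.sin (s * x) * (x ^ (-a - 1) / (α ^ 2 + x ^ 2))) +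
    2 * ∫ x in Set.Ioi (0:ℝ), Real.sin (s * x) * (x ^ (1 - a) / (α ^ 2 + x ^ 2) ^ 2) := by
  have hq0 : ∀ x : ℝ, α ^ 2 ≤ α ^ 2 + x ^ 2 := fun x => by nlinarith [sq_nonneg x]
  have hsin : ∀ x, 0 < x → |Real.sin (s * x)| ≤ s * x := fun x hx => by
    have := Real.abs_sin_le_abs (x := s * x)
    rwa [abs_of_pos (mul_pos hs hx)] at this
  have hpow : ∀ x : ℝ, 0 < x → x * x ^ (-a - 1) = x ^ (-a) := by
    intro x hx
    rw [← rpow_one_add' hx.le (by linarith)]; congr 1; ring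
  have i0 : IntegrableOn (fun x : ℝ => x ^ (-a) / (α ^ 2 + x ^ 2) * (Real.cos (s * x) * s)) (Set.Ioi 0) := by
    refine aux_int (C := s / α ^ 2) (D := s) (p := -a) (q := -a-2) (by fun_prop) (by linarith) (by linarith) ?_ ?_
    · intro x hx hx1
      rw [abs_mul, abs_mul, abs_of_pos hs, abs_of_nonneg (by positivity)]
      calc x ^ (-a) / (α ^ 2 + x ^ 2) * (|Real.cos (s * x)| * s) ≤ x ^ (-a) / α ^ 2 * (1 * s) := by
            gcongr
            · exact hq0 x
            · exact abs_cos_le_one _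
        _ = _ := by ring
    · intro x hx
      have hx0 : 0 < x := by linarith
      rw [abs_mul, abs_mul, abs_of_pos hs, abs_of_nonneg (by positivity)]
      calc x ^ (-a) / (α ^ 2 + x ^ 2) * (|Real.cos (s * x)| * s) ≤ x ^ (-a) / x ^ 2 * (1 * s) := by
            gcongr
            · nlinarith [sq_nonneg α]
            · exact abs_cos_le_one _
        _ = _ := by rw [rpow_sub hx0, rpow_two]; ring
  have i1 : IntegrableOn (fun x : ℝ => Real.sin (s * x) * (x ^ (-a - 1) / (α ^ 2 + x ^ 2))) (Set.Ioi 0) := by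
    refine aux_int (C := s / α ^ 2) (D := 1 / α ^ 2) (p := -a) (q := -a-1) (by fun_prop) (by linarith) (by linarith) ?_ ?_
    · intro x hx hx1
      rw [abs_mul, abs_of_nonneg (a := _ / _) (by positivity)]
      calc |Real.sin (s * x)| * (x ^ (-a - 1) / (α ^ 2 + x ^ 2)) ≤ (s * x) * (x ^ (-a - 1) / α ^ 2) := by
            gcongr
            · exact hsin x hx
            · exact hq0 x
        _ = _ := by rw [← hpow x hx]; ring
    · intro x hx
      have hx0 : 0 < x := by linarith
      rw [abs_mul, abs_of_nonneg (a := _ / _) (by positivity)]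
      calc |Real.sin (s * x)| * (x ^ (-a - 1) / (α ^ 2 + x ^ 2)) ≤ 1 * (x ^ (-a - 1) / α ^ 2) := by
            gcongr
            · exact abs_sin_le_one _
            · exact hq0 x
        _ = _ := by ring
  have i2 : IntegrableOn (fun x : ℝ => Real.sin (s * x) * (x ^ (1 - a) / (α ^ 2 + x ^ 2) ^ 2)) (Set.Ioi 0) := by
    refine Integrable.mono' (auxB_chi ha ha1 hα) (by apply Measurable.aestronglyMeasurable; fun_prop) ?_
    refine (ae_restrict_iff' measurableSet_Ioi).2 (ae_of_all _ fun x hx => ?_)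
    have hx' : 0 < x := hx
    rw [norm_mul, Real.norm_eq_abs, Real.norm_eq_abs, abs_of_nonneg (a := _ / _) (by positivity)]
    exact mul_le_of_le_one_left (by positivity) (abs_sin_le_one _)
  have P := integral_Ioi_mul_deriv_eq_deriv_mul (a := 0) (a' := 0) (b' := 0)
    (u := fun x : ℝ => x ^ (-a) / (α ^ 2 + x ^ 2))
    (v := fun x : ℝ => Real.sin (s * x))
    (v' := fun x : ℝ => Real.cos (s * x) * s)
    (u' := fun x : ℝ => -(a * (x ^ (-a - 1) / (α ^ 2 + x ^ 2)) + 2 * (x ^ (1 - a) / (α ^ 2 + x ^ 2) ^ 2)))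
    ?_ ?_ i0 ?_ ?_ ?_
  · rw [← integral_const_mul, ← integral_const_mul, ← integral_const_mul, ← integral_add (i1.const_mul a) (i2.const_mul 2)]
    rw [sub_zero, zero_sub, ← integral_neg] at P
    calc _ = _ := by congr 1; ext x; ring
      _ = _ := P
      _ = _ := by congr 1; ext x; ring
  · intro x hx
    have hx' : 0 < x := hx
    have d1 : HasDerivAt (fun x : ℝ => x ^ (-a)) (-a * x ^ (-a - 1)) x := hasDerivAt_rpow_const (Or.inl hx'.ne')
    have d2 : HasDerivAt (fun x : ℝ => α ^ 2 + x ^ 2) (2 * x) x := by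
      simpa using (hasDerivAt_pow 2 x).const_add (α ^ 2)
    have d3 := d1.div d2 (by positivity)
    refine HasDerivAt.congr_deriv d3 ?_
    have e1 : x ^ (1 - a) = x ^ (-a) * x := by
      rw [← rpow_add_one hx'.ne']; congr 1; ring
    rw [e1]
    field_simp
    ring
  · intro x _
    have := ((hasDerivAt_id x).const_mul s).sin
    simpa using this
  · have := ((i1.const_mul a).add (i2.const_mul 2)).neg
    refine this.congr (ae_of_all _ fun x => ?_)
    simp only [Pi.neg_apply, Pi.add_apply, Pi.mul_apply]
    ring
  · have b : Tendsto (fun x : ℝ => s / α ^ 2 * x ^ (1 - a)) (𝓝[>] 0) (𝓝 0) := by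
      have : Tendsto (fun x : ℝ => s / α ^ 2 * x ^ (1 - a)) (𝓝 0) (𝓝 (s / α ^ 2 * 0 ^ (1 - a))) :=
        ((Real.continuousAt_rpow_const 0 (1-a) (Or.inr (by linarith))).tendsto).const_mul _
      rw [zero_rpow (by linarith), mul_zero] at this
      exact this.mono_left nhdsWithin_le_nhds
    refine squeeze_zero_norm' ?_ b
    filter_upwards [self_mem_nhdsWithin] with x hx
    have hx' : 0 < x := hx
    have e1 : x ^ (1 - a) = x ^ (-a) * x := by
      rw [← rpow_add_one hx'.ne']; congr 1; ring
    simp only [Pi.mul_apply]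
    rw [norm_mul, Real.norm_eq_abs, Real.norm_eq_abs, abs_of_nonneg (a := _ / _) (by positivity)]
    calc x ^ (-a) / (α ^ 2 + x ^ 2) * |Real.sin (s * x)| ≤ x ^ (-a) / α ^ 2 * (s * x) := by
          gcongr
          · exact hq0 x
          · exact hsin x hx
      _ = _ := by rw [e1]; ring
  · have b : Tendsto (fun x : ℝ => 1 / α ^ 2 * x ^ (-a)) atTop (𝓝 0) := by
      have := (tendsto_rpow_neg_atTop ha).const_mul (1 / α ^ 2)
      rwa [mul_zero] at this
    refine squeeze_zero_norm' ?_ b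
    filter_upwards [eventually_gt_atTop 0] with x hx'
    simp only [Pi.mul_apply]
    rw [norm_mul, Real.norm_eq_abs, Real.norm_eq_abs, abs_of_nonneg (a := _ / _) (by positivity)]
    calc x ^ (-a) / (α ^ 2 + x ^ 2) * |Real.sin (s * x)| ≤ x ^ (-a) / α ^ 2 * 1 := by
          gcongr
          · exact hq0 x
          · exact abs_sin_le_one _
      _ = _ := by ring

lemma auxB {a α : ℝ} (ha : 0 < a) (ha1 : a < 1) (hα : 0 < α) :
    Tendsto (fun s : ℝ => s ^ (1 - a) * ∫ x : ℝ, Real.cos (s * x) * (|x| ^ (-a) / (α ^ 2 + x ^ 2))) atTop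
      (𝓝 (2 * a / α ^ 2 * (π / 2 / Real.sin (π * ((a + 1) / 2)) / Real.Gamma (a + 1)))) := by
  have t1 := auxB_J1 ha ha1 hα
  have t2 : Tendsto (fun s : ℝ => s ^ (-a) * ∫ x in Set.Ioi (0:ℝ),
      Real.sin (s * x) * (x ^ (1 - a) / (α ^ 2 + x ^ 2) ^ 2)) atTop (𝓝 0) := by
    refine (tendsto_rpow_neg_atTop ha).zero_mul_isBoundedUnder_le ?_
    refine isBoundedUnder_of ⟨∫ x in Set.Ioi (0:ℝ), x ^ (1 - a) / (α ^ 2 + x ^ 2) ^ 2, fun s => ?_⟩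
    refine norm_integral_le_of_norm_le (auxB_chi ha ha1 hα) ?_
    refine (ae_restrict_iff' measurableSet_Ioi).2 (ae_of_all _ fun x hx => ?_)
    have hx' : 0 < x := hx
    rw [norm_mul, Real.norm_eq_abs, Real.norm_eq_abs, abs_of_nonneg (a := _ / _) (by positivity)]
    exact mul_le_of_le_one_left (by positivity) (abs_sin_le_one _)
  have t3 := ((t1.const_mul a).add (t2.const_mul 2)).const_mul 2
  rw [aux_sin ha ha1] at t3
  have e : ∀ c : ℝ, 2 * (a * (c / α ^ 2) + 2 * 0) = 2 * a / α ^ 2 * c := fun c => by ring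
  rw [e] at t3
  refine t3.congr' ?_
  filter_upwards [eventually_gt_atTop 0] with s hs
  have f1 : ∫ x : ℝ, Real.cos (s * x) * (|x| ^ (-a) / (α ^ 2 + x ^ 2)) =
      2 * ∫ x in Set.Ioi (0:ℝ), Real.cos (s * x) * (x ^ (-a) / (α ^ 2 + x ^ 2)) := by
    rw [← integral_comp_abs (f := fun x : ℝ => Real.cos (s * x) * (x ^ (-a) / (α ^ 2 + x ^ 2)))]
    congr 1; ext x
    rw [sq_abs]
    congr 1
    rw [← Real.cos_abs (s * x), abs_mul, abs_of_pos hs]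
  have f2 := auxB_parts ha ha1 hα hs
  have f3 : s ^ (1 - a) = s ^ (-a) * s := by
    rw [← rpow_add_one hs.ne']; congr 1; ring
  rw [f1, f3]
  linear_combination (-2 * s ^ (-a)) * f2

lemma auxA_int {β : ℝ} (hβ : 0 < β) :
    IntegrableOn (fun t : ℝ => rexp (-β * t) * t ^ (-(1/2) : ℝ)) (Set.Ioi 0) := by
  have := integrableOn_rpow_mul_exp_neg_mul_rpow (p := 1) (s := -(1/2)) (b := β) (by norm_num) one_pos hβ
  simpa [IntegrableOn, mul_comm] using this

lemma auxA_le {v t : ℝ} (hv : 0 ≤ v) (ht : 0 < t) :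
    (v + t) ^ (-(1/2) : ℝ) ≤ t ^ (-(1/2) : ℝ) :=
  rpow_le_rpow_of_nonpos ht (by linarith) (by norm_num)

lemma auxA_intv {β v : ℝ} (hβ : 0 < β) (hv : 0 ≤ v) :
    IntegrableOn (fun t : ℝ => rexp (-β * t) * (v + t) ^ (-(1/2) : ℝ)) (Set.Ioi 0) := by
  refine Integrable.mono' (auxA_int hβ) (by apply Measurable.aestronglyMeasurable; fun_prop) ?_
  refine (ae_restrict_iff' measurableSet_Ioi).2 (ae_of_all _ fun t ht => ?_)
  have ht' : 0 < t := ht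
  rw [Real.norm_eq_abs, abs_of_nonneg (by positivity)]
  exact mul_le_mul_of_nonneg_left (auxA_le hv ht) (Real.exp_pos _).le

lemma auxA_G (β : ℝ) : ∃ g : ℝ → ℝ, g = fun v => ∫ t in Set.Ioi (0:ℝ), rexp (-β * t) * (v + t) ^ (-(1/2) : ℝ) := ⟨_, rfl⟩

lemma auxA_g {β : ℝ} (hβ : 0 < β) (g : ℝ → ℝ)
    (hg : g = fun v => ∫ t in Set.Ioi (0:ℝ), rexp (-β * t) * (v + t) ^ (-(1/2) : ℝ)) :
    Measurable g ∧ (∀ v, 0 ≤ v → 0 ≤ g v) ∧ (∀ v, 0 ≤ v → g v ≤ g 0) ∧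
    (∀ v, 0 ≤ v → √v * g v ≤ 1/β) ∧ Tendsto (fun v => √v * g v) atTop (𝓝 (1/β)) := by
  have hone : ∫ t in Set.Ioi (0:ℝ), rexp (-β * t) = 1/β := by
    rw [integral_exp_mul_Ioi (by linarith)]; simp
  have hexp : IntegrableOn (fun t : ℝ => rexp (-β * t)) (Set.Ioi 0) :=
    integrableOn_exp_mul_Ioi (by linarith) 0
  have hle : ∀ v t : ℝ, 0 ≤ v → 0 < t → √v * (v + t) ^ (-(1/2) : ℝ) ≤ 1 := by
    intro v t hv ht
    rw [rpow_neg (by positivity), ← sqrt_eq_rpow]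
    rw [← div_eq_mul_inv, div_le_one (by positivity)]
    exact Real.sqrt_le_sqrt (by linarith)
  refine ⟨?_, ?_, ?_, ?_, ?_⟩
  · have : StronglyMeasurable (Function.uncurry fun v t : ℝ => rexp (-β * t) * (v + t) ^ (-(1/2) : ℝ)) := by
      apply Measurable.stronglyMeasurable; unfold Function.uncurry; fun_prop
    rw [hg]
    exact (this.integral_prod_right (ν := volume.restrict (Set.Ioi (0:ℝ)))).measurable
  · intro v hv
    rw [hg]
    refine setIntegral_nonneg measurableSet_Ioi fun t ht => ?_
    have ht' : 0 < t := ht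
    positivity
  · intro v hv
    rw [hg]
    refine setIntegral_mono_on (auxA_intv hβ hv) (auxA_intv hβ le_rfl) measurableSet_Ioi fun t ht => ?_
    have := auxA_le hv ht
    rw [zero_add]; gcongr
  · intro v hv
    rw [hg, ← hone]
    simp only
    rw [← integral_const_mul]
    refine setIntegral_mono_on ((auxA_intv hβ hv).const_mul _) hexp measurableSet_Ioi fun t ht => ?_
    have := hle v t hv ht
    rw [mul_left_comm]
    exact mul_le_of_le_one_right (Real.exp_pos _).le this
  · rw [hg, ← hone]
    simp only [← integral_const_mul]
    refine tendsto_integral_filter_of_dominated_convergence (fun t => rexp (-β * t)) ?_ ?_ hexp ?_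
    · refine Eventually.of_forall fun v => ?_
      apply Measurable.aestronglyMeasurable; fun_prop
    · filter_upwards [eventually_ge_atTop 0] with v hv
      refine (ae_restrict_iff' measurableSet_Ioi).2 (ae_of_all _ fun t ht => ?_)
      have ht' : 0 < t := ht
      rw [Real.norm_eq_abs, abs_of_nonneg (by positivity), mul_left_comm]
      exact mul_le_of_le_one_right (Real.exp_pos _).le (hle v t hv ht)
    · refine (ae_restrict_iff' measurableSet_Ioi).2 (ae_of_all _ fun t ht => ?_)
      have ht' : 0 < t := ht
      have e : Tendsto (fun v : ℝ => rexp (-β * t) * (1 + t * v⁻¹) ^ (-(1/2) : ℝ)) atTop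
          (𝓝 (rexp (-β * t) * (1 + t * 0) ^ (-(1/2) : ℝ))) := by
        refine Tendsto.const_mul _ ?_
        refine Tendsto.rpow_const ?_ (Or.inl (by norm_num))
        exact (tendsto_inv_atTop_zero.const_mul t).const_add 1
      rw [mul_zero, add_zero, one_rpow, mul_one] at e
      refine e.congr' ?_
      filter_upwards [eventually_gt_atTop 0] with v hv
      rw [mul_left_comm]
      congr 1
      rw [show 1 + t * v⁻¹ = (v + t) / v by field_simp, div_rpow (by positivity) hv.le,
        rpow_neg hv.le, ← sqrt_eq_rpow]
      field_simp

lemma auxA {α β : ℝ} (hα : 0 < α) (hβ : 0 < β) :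
    Tendsto (fun s : ℝ => √s * (rexp (-α * s) * ∫ v in (0:ℝ)..s, rexp (α * v) *
      ∫ u in Set.Iic (0:ℝ), rexp (β * u) * (v - u) ^ (-(1/2) : ℝ))) atTop (𝓝 (1 / α * (1/β))) := by
  obtain ⟨g, hg⟩ := auxA_G β
  obtain ⟨hm, hn, h0, hb, hl⟩ := auxA_g hβ g hg
  have hexp : IntegrableOn (fun t : ℝ => rexp (-α * t)) (Set.Ioi 0) :=
    integrableOn_exp_mul_Ioi (by linarith) 0
  have hone : ∫ t in Set.Ioi (0:ℝ), rexp (-α * t) * (1/β) = 1/α * (1/β) := by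
    rw [integral_mul_const, integral_exp_mul_Ioi (by linarith)]; simp
  have hgv : ∀ v, ∫ u in Set.Iic (0:ℝ), rexp (β * u) * (v - u) ^ (-(1/2) : ℝ) = g v := by
    intro v
    have := integral_comp_neg_Iic 0 (fun t : ℝ => rexp (-β * t) * (v + t) ^ (-(1/2) : ℝ))
    rw [hg]
    simp only [neg_zero] at this ⊢
    rw [← this]
    congr 1; ext u; simp [sub_eq_add_neg]
  simp only [hgv]
  have key : Tendsto (fun s : ℝ => ∫ w in Set.Ioi (0:ℝ), (Set.Ioc 0 s).indicator
      (fun w => rexp (-α * w) * (√s * g (s - w))) w) atTop (𝓝 (1/α * (1/β))) := by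
    rw [← hone]
    refine tendsto_integral_filter_of_dominated_convergence
      (fun w => rexp (-α * w) * (1/β) + g 0 * (w ^ (1/2 : ℝ) * rexp (-α * w))) ?_ ?_ ?_ ?_
    · refine Eventually.of_forall fun s => ?_
      apply Measurable.aestronglyMeasurable
      refine Measurable.indicator ?_ measurableSet_Ioc
      fun_prop
    · refine Eventually.of_forall fun s => ?_
      refine (ae_restrict_iff' measurableSet_Ioi).2 (ae_of_all _ fun w hw => ?_)
      have hw' : 0 < w := hw
      have hg0 := hn 0 le_rfl
      by_cases hws : w ≤ s
      · rw [Set.indicator_of_mem (show w ∈ Set.Ioc 0 s from ⟨hw, hws⟩)]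
        have hsw : 0 ≤ s - w := by linarith
        have h1 := hn (s-w) hsw
        have h2 := h0 (s-w) hsw
        have h3 := hb (s-w) hsw
        rw [Real.norm_eq_abs, abs_of_nonneg (by positivity), ← sqrt_eq_rpow]
        have h4 : √s ≤ √(s - w) + √w := by
          rw [Real.sqrt_le_iff]
          refine ⟨by positivity, ?_⟩
          have e1 := Real.sq_sqrt hsw
          have e2 := Real.sq_sqrt hw'.le
          have e3 : 0 ≤ √(s - w) * √w := by positivity
          nlinarith
        have h5 : √s * g (s-w) ≤ 1/β + g 0 * √w := by
          calc √s * g (s-w) ≤ (√(s-w) + √w) * g (s-w) := by gcongr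
            _ = √(s-w) * g (s-w) + g (s-w) * √w := by ring
            _ ≤ _ := by gcongr
        calc rexp (-α * w) * (√s * g (s-w)) ≤ rexp (-α * w) * (1/β + g 0 * √w) := by gcongr
          _ = _ := by ring
      · rw [Set.indicator_of_notMem (fun h => hws h.2), norm_zero]
        positivity
    · refine (hexp.mul_const _).add (Integrable.const_mul ?_ _)
      have := integrableOn_rpow_mul_exp_neg_mul_rpow (p := 1) (s := (1/2)) (b := α) (by norm_num) one_pos hα
      simpa [IntegrableOn] using this
    · refine (ae_restrict_iff' measurableSet_Ioi).2 (ae_of_all _ fun w hw => ?_)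
      have hw' : 0 < w := hw
      have t1 : Tendsto (fun s : ℝ => s - w) atTop atTop := tendsto_atTop_add_const_right _ _ tendsto_id
      have t2 : Tendsto (fun s : ℝ => √(1 + w * (s-w)⁻¹)) atTop (𝓝 (√(1 + w * 0))) := by
        refine (Real.continuous_sqrt.tendsto _).comp ?_
        exact ((tendsto_inv_atTop_zero.comp t1).const_mul w).const_add 1
      have t3 := (t2.mul (hl.comp t1)).const_mul (rexp (-α * w))
      rw [mul_zero, add_zero, Real.sqrt_one, one_mul] at t3
      refine t3.congr' ?_
      filter_upwards [eventually_gt_atTop w] with s hs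
      rw [Set.indicator_of_mem (show w ∈ Set.Ioc 0 s from ⟨hw, hs.le⟩)]
      congr 1
      have hsw : 0 < s - w := by linarith
      simp only [Function.comp]
      rw [← mul_assoc, ← Real.sqrt_mul (by positivity)]
      congr 2
      field_simp
      ring
  refine key.congr' ?_
  filter_upwards [eventually_gt_atTop 0] with s hs
  rw [setIntegral_indicator measurableSet_Ioc, Set.inter_eq_right.2 (fun x hx => hx.1),
    ← intervalIntegral.integral_of_le hs.le]
  have := intervalIntegral.integral_comp_sub_left (a := 0) (b := s)
    (fun w => rexp (-α * w) * (√s * g (s - w))) s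
  rw [sub_self, sub_zero] at this
  rw [← this, ← intervalIntegral.integral_const_mul, ← intervalIntegral.integral_const_mul]
  congr 1; ext v
  rw [sub_sub_cancel, show -α * (s - v) = -α * s + α * v by ring, Real.exp_add]; ring

lemma auxR {H α ν : ℝ} (hH : H ∈ Set.Ioo (1/2 : ℝ) 1) (hα : 0 < α) (r : ℝ → ℝ)
    (hr : ∀ s, r s = ν ^ 2 * (Real.Gamma (2 * H + 1) * Real.sin (π * H)) / (2 * π) *
      ∫ x : ℝ, Real.cos (s * x) * (|x| ^ (1 - 2 * H) / (α ^ 2 + x ^ 2))) :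
    Tendsto (fun s : ℝ => s ^ (2 - 2 * H) * r s) atTop (𝓝 (ν ^ 2 * H * (2 * H - 1) / α ^ 2)) := by
  obtain ⟨hl, hu⟩ := hH
  have t := (auxB (a := 2 * H - 1) (α := α) (by linarith) (by linarith) hα).const_mul
    (ν ^ 2 * (Real.Gamma (2 * H + 1) * Real.sin (π * H)) / (2 * π))
  have hsin : 0 < Real.sin (π * H) :=
    Real.sin_pos_of_pos_of_lt_pi (by positivity) (by nlinarith [Real.pi_pos])
  have hG : 0 < Real.Gamma (2 * H) := Real.Gamma_pos_of_pos (by linarith)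
  rw [show (2 * H - 1 + 1) / 2 = H by ring, show 2 * H - 1 + 1 = 2 * H by ring,
    Real.Gamma_add_one (by linarith), show -(2 * H - 1) = 1 - 2 * H by ring,
    show 1 - (2 * H - 1) = 2 - 2 * H by ring] at t
  convert t using 1
  · ext s
    rw [hr, Real.Gamma_add_one (by linarith)]; ring
  · congr 1
    generalize Real.sin (π * H) = S at hsin ⊢
    generalize Real.Gamma (2 * H) = G at hG ⊢
    field_simp

lemma auxS {α β c C0 : ℝ} (hα : 0 < α) (hβ : 0 < β) (r I : ℝ → ℝ)
    (hI : ∀ s, I s = ∫ v in (0:ℝ)..s, Real.exp (α * v) *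
        ∫ u in Set.Iic (0:ℝ), Real.exp (β * u) * (v - u) ^ (-(1/2) : ℝ))
    (hr : ∀ s, r s = Real.exp (-α * s) * C0 + c * (Real.exp (-α * s) * I s)) :
    Tendsto (fun s : ℝ => √s * r s) atTop (𝓝 (c * (1 / α * (1 / β)))) := by
  have t1 := (auxA hα hβ).const_mul c
  have t2 : Tendsto (fun s : ℝ => (s ^ (1/2 : ℝ) * rexp (-α * s)) * C0) atTop (𝓝 (0 * C0)) :=
    (tendsto_rpow_mul_exp_neg_mul_atTop_nhds_zero (1/2) α hα).mul_const C0
  have t3 := t2.add t1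
  rw [zero_mul, zero_add] at t3
  refine t3.congr fun s => ?_
  rw [hr, hI, ← sqrt_eq_rpow]; ring

/-- Identification of the constant `ℓ` in the critical case `H = H₁ + H₂ = 3/2`
(proof of Theorem 3.9):
`s (r₁₁(s) r₂₂(s) + r₁₂(s) r₂₁(s)) → (ν₁²ν₂²/(4α₁²α₂²)) (9/16 (ρ²-η²) + 4H₁H₂(2H₁-1)(2H₂-1))`. -/
theorem stmt19
    (α1 α2 ν1 ν2 H1 H2 ρ η : ℝ)
    (hα1 : 0 < α1) (hα2 : 0 < α2) (hν1 : 0 < ν1) (hν2 : 0 < ν2)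
    (h1 : H1 ∈ Set.Ioo (1/2 : ℝ) 1) (h2 : H2 ∈ Set.Ioo (1/2 : ℝ) 1)
    (hH : H1 + H2 = 3 / 2)
    (C0 : ℝ)
    (hC0 : C0 = Real.Gamma (H1 + H2 + 1) * ν1 * ν2 / (2 * (α1 + α2)) *
      ((α1 ^ (1 - (H1 + H2)) + α2 ^ (1 - (H1 + H2))) * ρ +
        (α2 ^ (1 - (H1 + H2)) - α1 ^ (1 - (H1 + H2))) * η))
    (I12 I21 : ℝ → ℝ)
    (hI12 : ∀ s, I12 s =
      ∫ v in (0:ℝ)..s, Real.exp (α2 * v) *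
        ∫ u in Set.Iic (0:ℝ), Real.exp (α1 * u) * (v - u) ^ (H1 + H2 - 2))
    (hI21 : ∀ s, I21 s =
      ∫ v in (0:ℝ)..s, Real.exp (α1 * v) *
        ∫ u in Set.Iic (0:ℝ), Real.exp (α2 * u) * (v - u) ^ (H1 + H2 - 2))
    (r12 r21 : ℝ → ℝ)
    (hr12 : ∀ s, r12 s = Real.exp (-α2 * s) * C0 +
      ν1 * ν2 * Real.exp (-α2 * s) * ((H1 + H2) * (H1 + H2 - 1)) * ((ρ - η) / 2) * I12 s)
    (hr21 : ∀ s, r21 s = Real.exp (-α1 * s) * C0 +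
      ν1 * ν2 * Real.exp (-α1 * s) * ((H1 + H2) * (H1 + H2 - 1)) * ((ρ + η) / 2) * I21 s)
    (r11 r22 : ℝ → ℝ)
    (hr11 : ∀ s, r11 s = ν1 ^ 2 * (Real.Gamma (2 * H1 + 1) * Real.sin (π * H1)) / (2 * π) *
      ∫ x : ℝ, Real.cos (s * x) * (|x| ^ (1 - 2 * H1) / (α1 ^ 2 + x ^ 2)))
    (hr22 : ∀ s, r22 s = ν2 ^ 2 * (Real.Gamma (2 * H2 + 1) * Real.sin (π * H2)) / (2 * π) *
      ∫ x : ℝ, Real.cos (s * x) * (|x| ^ (1 - 2 * H2) / (α2 ^ 2 + x ^ 2))) :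
    Tendsto (fun s : ℝ => s * (r11 s * r22 s + r12 s * r21 s)) atTop
      (𝓝 (ν1 ^ 2 * ν2 ^ 2 / (4 * α1 ^ 2 * α2 ^ 2) *
        (9 / 16 * (ρ ^ 2 - η ^ 2) + 4 * H1 * H2 * (2 * H1 - 1) * (2 * H2 - 1)))) := by
  have e2 : H1 + H2 - 2 = (-(1/2) : ℝ) := by rw [hH]; norm_num
  rw [e2] at hI12 hI21
  have t1 := auxR h1 hα1 r11 hr11
  have t2 := auxR h2 hα2 r22 hr22
  have t3 := auxS (c := ν1 * ν2 * (3 / 4) * ((ρ - η) / 2)) (C0 := C0) hα2 hα1 r12 I12 hI12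
    (fun s => by rw [hr12, hH]; ring)
  have t4 := auxS (c := ν1 * ν2 * (3 / 4) * ((ρ + η) / 2)) (C0 := C0) hα1 hα2 r21 I21 hI21
    (fun s => by rw [hr21, hH]; ring)
  have t := (t1.mul t2).add (t3.mul t4)
  have hlim : ν1 ^ 2 * H1 * (2 * H1 - 1) / α1 ^ 2 * (ν2 ^ 2 * H2 * (2 * H2 - 1) / α2 ^ 2) +
      ν1 * ν2 * (3 / 4) * ((ρ - η) / 2) * (1 / α2 * (1 / α1)) *
        (ν1 * ν2 * (3 / 4) * ((ρ + η) / 2) * (1 / α1 * (1 / α2))) =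
      ν1 ^ 2 * ν2 ^ 2 / (4 * α1 ^ 2 * α2 ^ 2) *
        (9 / 16 * (ρ ^ 2 - η ^ 2) + 4 * H1 * H2 * (2 * H1 - 1) * (2 * H2 - 1)) := by
    field_simp
    ring
  rw [hlim] at t
  refine t.congr' ?_
  filter_upwards [eventually_gt_atTop 0] with s hs
  have p1 : s ^ (2 - 2 * H1) * s ^ (2 - 2 * H2) = s := by
    rw [← rpow_add hs, show 2 - 2 * H1 + (2 - 2 * H2) = 1 by linarith, rpow_one]
  have p2 : √s * √s = s := Real.mul_self_sqrt hs.le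
  linear_combination (r11 s * r22 s) * p1 + (r12 s * r21 s) * p2
end
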